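/- arXiv:2303.03327 — 3 statements merged into one kernel-verified Lean document; each statement's English description precedes it below -/
import Mathlib

section
/- Exact-regret corollary (Remark 3). Let M be a class of bandit models on an action set Π with mean reward functions f_M : Π → [0,1], variance-1 Gaussian reward noise, and sup_{M∈M} f_M(π_M) = 1. Let T ≥ 1 and let ε satisfy 4/T ≤ ε ≤ 1/(18√T). Set Δ := dec^1_ε(M) and suppose Δ ≥ 216ε. Then for any algorithm there exists M ∈ M such that P^M[ Reg(T) ≥ (Δ/2)·T ] ≥ 1/18, and consequently E^M[Reg(T)] ≥ (Δ/36)·T, where Reg(T) := Σ_{t=1}^T (max_{π∈Π} f_M(π) − f_M(π_t)). -/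
open MeasureTheory ProbabilityTheory
open scoped ENNReal NNReal

noncomputable section

/-- Trajectory law of a bandit algorithm with Gaussian variance-1 reward noise:
the law of `((π₁,r₁),…,(π_n,r_n))` where `π_t ∼ alg t` applied to the history and
`r_t ∼ N(f π_t, 1)`. -/
def trajMeasure {P : Type*} [MeasurableSpace P] (f : P → ℝ)
    (alg : (t : ℕ) → Kernel (Fin t → P × ℝ) P) :
    (n : ℕ) → Measure (Fin n → P × ℝ)
  | 0 => Measure.dirac (fun i : Fin 0 => i.elim0)
  | (n+1) => (trajMeasure f alg n).bind fun h =>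
      (alg n h).bind fun a =>
        (gaussianReal (f a) 1).map fun r => Fin.snoc h (a, r)

/-- Constrained γ-DEC of a class of mean reward functions with respect to a
reference mean function `fbar`. -/
def decConstrained {P : Type*} [MeasurableSpace P] (γ ε : ℝ)
    (F : Set (P → ℝ)) (fbar : P → ℝ) : ℝ :=
  ⨅ p : ProbabilityMeasure P,
    ⨆ f : {f : P → ℝ // f ∈ F ∧ ∫ x, (f x - fbar x)^2 ∂(p : Measure P) ≤ ε^2},
      ∫ x, (γ * (⨆ y, (f : P → ℝ) y) - (f : P → ℝ) x) ∂(p : Measure P)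

/-- The γ-DEC of a model class: the supremum over reference mean functions `fbar`
(with values in [0,1], not necessarily in the class). -/
def dec {P : Type*} [MeasurableSpace P] (γ ε : ℝ) (F : Set (P → ℝ)) : ℝ :=
  ⨆ fbar : {g : P → ℝ // Measurable g ∧ ∀ x, g x ∈ Set.Icc (0:ℝ) 1},
    decConstrained γ ε (F ∪ {(fbar : P → ℝ)}) fbar

set_option linter.unusedSectionVars false

section Generic

variable {Y : Type*} [MeasurableSpace Y]

def snocM (n : ℕ) (p : (Fin n → Y) × Y) : Fin (n+1) → Y := Fin.snoc p.1 p.2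

lemma measurable_snocM (n : ℕ) : Measurable (snocM (Y := Y) n) := by
  rw [measurable_pi_iff]
  intro i
  refine Fin.lastCases ?_ (fun j => ?_) i
  · simp only [snocM, Fin.snoc_last]; exact measurable_snd
  · simp only [snocM, Fin.snoc_castSucc]
    exact (measurable_pi_apply j).comp measurable_fst

lemma sum_snocM (n : ℕ) (p : (Fin n → Y) × Y) (X : Y → ℝ) :
    ∑ t, X (snocM n p t) = ∑ t, X (p.1 t) + X p.2 := by
  rw [Fin.sum_univ_castSucc]; simp [snocM]

def Law (κ : (n : ℕ) → Kernel (Fin n → Y) Y) : (n : ℕ) → Measure (Fin n → Y)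
  | 0 => Measure.dirac (fun i : Fin 0 => i.elim0)
  | (n+1) => ((Law κ n) ⊗ₘ (κ n)).map (snocM n)

instance Law_prob (κ : (n : ℕ) → Kernel (Fin n → Y) Y) [∀ n, IsMarkovKernel (κ n)] (n : ℕ) :
    IsProbabilityMeasure (Law κ n) := by
  induction n with
  | zero => simp only [Law]; infer_instance
  | succ n ih =>
    simp only [Law]
    exact Measure.isProbabilityMeasure_map (measurable_snocM n).aemeasurable

lemma int_bdd {X : Type*} [MeasurableSpace X] {μ : Measure X} [IsFiniteMeasure μ] {g : X → ℝ}
    (hg : Measurable g) {C : ℝ} (hC : ∀ x, |g x| ≤ C) : Integrable g μ :=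
  Integrable.of_bound hg.aestronglyMeasurable C (Filter.Eventually.of_forall hC)

lemma integral_bdd {X : Type*} [MeasurableSpace X] {μ : Measure X} [IsProbabilityMeasure μ]
    {g : X → ℝ} (hg : Measurable g) {a b : ℝ} (hC : ∀ x, a ≤ g x ∧ g x ≤ b) :
    a ≤ ∫ x, g x ∂μ ∧ ∫ x, g x ∂μ ≤ b := by
  have hi : Integrable g μ := int_bdd (C := max |a| |b|) hg
    (fun x => abs_le_max_abs_abs (hC x).1 (hC x).2)
  constructor
  · have := integral_mono (μ := μ) (integrable_const a) hi (fun x => (hC x).1)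
    simpa using this
  · have := integral_mono (μ := μ) hi (integrable_const b) (fun x => (hC x).2)
    simpa using this

lemma exp_jensen {X : Type*} [MeasurableSpace X] {μ : Measure X} [IsProbabilityMeasure μ]
    {g : X → ℝ} (hg : Integrable g μ) (hg' : Integrable (fun x => Real.exp (g x)) μ) :
    Real.exp (∫ x, g x ∂μ) ≤ ∫ x, Real.exp (g x) ∂μ :=
  convexOn_exp.map_integral_le Real.continuous_exp.continuousOn isClosed_univ
    (Filter.Eventually.of_forall fun _ => Set.mem_univ _) hg hg'

lemma measurable_kint {α β : Type*} [MeasurableSpace α] [MeasurableSpace β] (κ : Kernel α β)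
    [IsSFiniteKernel κ] {g : α × β → ℝ} (hg : Measurable g) :
    Measurable (fun a => ∫ b, g (a, b) ∂κ a) :=
  (StronglyMeasurable.integral_kernel_prod_right' (κ := κ) hg.stronglyMeasurable).measurable

lemma integral_Law_succ (κ : (n : ℕ) → Kernel (Fin n → Y) Y) [∀ n, IsMarkovKernel (κ n)] (n : ℕ)
    {g : (Fin (n+1) → Y) → ℝ} (hg : Measurable g) {C : ℝ} (hC : ∀ x, |g x| ≤ C) :
    ∫ ω, g ω ∂Law κ (n+1) = ∫ h, ∫ x, g (snocM n (h, x)) ∂κ n h ∂Law κ n := by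
  simp only [Law]
  rw [integral_map (measurable_snocM n).aemeasurable hg.aestronglyMeasurable,
    Measure.integral_compProd]
  exact int_bdd (hg.comp (measurable_snocM n)) (fun x => hC _)

lemma change_measure (κ κ' : (n : ℕ) → Kernel (Fin n → Y) Y) [∀ n, IsMarkovKernel (κ n)]
    [∀ n, IsMarkovKernel (κ' n)] (c : Y → ℝ) (hc : Measurable c) (Cc : ℝ) (hcb : ∀ x, |c x| ≤ Cc)
    (hstep : ∀ n h (g : Y → ℝ), Measurable g → (∃ C, ∀ x, |g x| ≤ C) →
      Real.exp (∫ x, (g x - c x) ∂κ' n h) ≤ ∫ x, Real.exp (g x) ∂κ n h) (n : ℕ) :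
    ∀ g : (Fin n → Y) → ℝ, Measurable g → (∃ C, ∀ x, |g x| ≤ C) →
      Real.exp (∫ ω, (g ω - ∑ t, c (ω t)) ∂Law κ' n) ≤ ∫ ω, Real.exp (g ω) ∂Law κ n := by
  induction n with
  | zero => intro g hg _; simp [Law]
  | succ n ih =>
    rintro g hg ⟨C, hC⟩
    have hs := measurable_snocM (Y := Y) n
    set G : (Fin n → Y) → ℝ := fun h => ∫ x, Real.exp (g (snocM n (h, x))) ∂κ n h with hG
    have hGm : Measurable G := measurable_kint (κ n) (Real.measurable_exp.comp (hg.comp hs))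
    have hGb : ∀ h, Real.exp (-C) ≤ G h ∧ G h ≤ Real.exp C := by
      intro h
      refine integral_bdd (Real.measurable_exp.comp (hg.comp (hs.comp measurable_prodMk_left))) ?_
      intro x
      have := abs_le.1 (hC (snocM n (h, x)))
      exact ⟨Real.exp_le_exp.2 this.1, Real.exp_le_exp.2 this.2⟩
    have hGpos : ∀ h, 0 < G h := fun h => (Real.exp_pos _).trans_le (hGb h).1
    have hlogb : ∀ h, |Real.log (G h)| ≤ C := by
      intro h
      rw [abs_le]
      exact ⟨(Real.le_log_iff_exp_le (hGpos h)).2 (hGb h).1,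
        (Real.log_le_iff_le_exp (hGpos h)).2 (hGb h).2⟩
    have hsumm : ∀ m, Measurable (fun ω : Fin m → Y => ∑ t, c (ω t)) := fun m =>
      Finset.measurable_sum _ (fun t _ => hc.comp (measurable_pi_apply t))
    have hsumb : ∀ m (ω : Fin m → Y), |∑ t, c (ω t)| ≤ m * Cc := by
      intro m ω
      refine (Finset.abs_sum_le_sum_abs _ _).trans ?_
      refine (Finset.sum_le_sum (fun t _ => hcb (ω t))).trans ?_
      simp
    have key := ih (fun h => Real.log (G h)) (Real.measurable_log.comp hGm) ⟨C, hlogb⟩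
    have e1 : ∫ ω, Real.exp (g ω) ∂Law κ (n+1) = ∫ h, Real.exp (Real.log (G h)) ∂Law κ n := by
      rw [integral_Law_succ κ n (g := fun ω => Real.exp (g ω)) (C := Real.exp C)
        (Real.measurable_exp.comp hg)]
      · refine integral_congr_ae (Filter.Eventually.of_forall fun h => ?_)
        simp only [Real.exp_log (hGpos h)]; rfl
      · intro x
        rw [abs_of_pos (Real.exp_pos _)]
        exact Real.exp_le_exp.2 (abs_le.1 (hC x)).2
    rw [e1]
    refine le_trans (Real.exp_le_exp.2 ?_) key
    have hb' : ∀ ω : Fin (n+1) → Y, |g ω - ∑ t, c (ω t)| ≤ C + (n+1 : ℕ) * Cc := fun ω =>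
      (abs_sub _ _).trans (add_le_add (hC ω) (hsumb _ ω))
    rw [integral_Law_succ κ' n (g := fun ω => g ω - ∑ t, c (ω t)) (hg.sub (hsumm _)) hb']
    refine integral_mono (int_bdd (C := C + (n+1 : ℕ) * Cc) ?_ ?_)
      (int_bdd (C := C + n * Cc) ((Real.measurable_log.comp hGm).sub (hsumm n)) ?_) ?_
    · exact measurable_kint (κ' n) ((hg.sub (hsumm _)).comp hs)
    · intro h
      rw [abs_le]
      exact integral_bdd ((hg.sub (hsumm _)).comp (hs.comp measurable_prodMk_left))
        (fun x => abs_le.1 (hb' _))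
    · intro h; exact (abs_sub _ _).trans (add_le_add (hlogb h) (hsumb _ h))
    · intro h
      have hgm : Measurable (fun x => g (snocM n (h, x))) :=
        hg.comp (hs.comp measurable_prodMk_left)
      have h1 := hstep n h (fun x => g (snocM n (h, x))) hgm ⟨C, fun x => hC _⟩
      have h2 := (Real.le_log_iff_exp_le (hGpos h)).2 h1
      have h3 : ∫ x, (g (snocM n (h, x)) - ∑ t, c (snocM n (h, x) t)) ∂κ' n h
          = ∫ x, (g (snocM n (h, x)) - c x) ∂κ' n h - ∑ t, c (h t) := by
        have : ∀ x, g (snocM n (h, x)) - ∑ t, c (snocM n (h, x) t)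
            = (g (snocM n (h, x)) - c x) - ∑ t, c (h t) := by
          intro x; rw [sum_snocM]; ring
        simp_rw [this]
        rw [integral_sub _ (integrable_const _)]
        · simp
        · exact (int_bdd hgm (fun x => hC _)).sub (int_bdd hc hcb)
      simp only [h3]
      linarith

end Generic

lemma gauss_step (a b : ℝ) (g : ℝ → ℝ) (hg : Measurable g) (C : ℝ) (hC : ∀ x, |g x| ≤ C) :
    Real.exp (∫ x, g x ∂gaussianReal b 1 - (a - b)^2 / 2) ≤
      ∫ x, Real.exp (g x) ∂gaussianReal a 1 := by
  have hpdf : ∀ x, gaussianPDFReal a 1 x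
      = gaussianPDFReal b 1 x * Real.exp ((a - b) * (x - b) - (a-b)^2/2) := by
    intro x
    simp only [gaussianPDFReal]
    rw [mul_assoc _ (Real.exp _) (Real.exp _), ← Real.exp_add]
    congr 2
    push_cast
    ring
  have hid : Integrable (fun x : ℝ => x) (gaussianReal b 1) :=
    (memLp_id_gaussianReal 1).integrable (by simp)
  set L : ℝ → ℝ := fun x => (a - b) * (x - b) - (a-b)^2/2 with hL
  have hLi : Integrable L (gaussianReal b 1) :=
    ((hid.sub (integrable_const b)).const_mul (a-b)).sub (integrable_const _)
  have hLint : ∫ x, L x ∂gaussianReal b 1 = - (a-b)^2/2 := by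
    simp only [hL]
    have hi2 : Integrable (fun x : ℝ => (a - b) * (x - b)) (gaussianReal b 1) :=
      (hid.sub (integrable_const b)).const_mul (a-b)
    rw [integral_sub hi2 (integrable_const _),
      integral_const_mul, integral_sub hid (integrable_const b), integral_id_gaussianReal]
    simp; ring
  have hgi : Integrable g (gaussianReal b 1) := int_bdd hg hC
  have e : ∫ x, Real.exp (g x) ∂gaussianReal a 1
      = ∫ x, Real.exp (g x + L x) ∂gaussianReal b 1 := by
    rw [integral_gaussianReal_eq_integral_smul one_ne_zero,
      integral_gaussianReal_eq_integral_smul one_ne_zero]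
    refine integral_congr_ae (Filter.Eventually.of_forall fun x => ?_)
    simp only [hpdf, smul_eq_mul, Real.exp_add]
    ring
  have hLe : Integrable (fun x => Real.exp (L x)) (gaussianReal b 1) := by
    have := (integrable_exp_mul_gaussianReal (μ := b) (v := 1) (a - b)).const_mul
      (Real.exp (-(a-b)*b - (a-b)^2/2))
    refine this.congr (Filter.Eventually.of_forall fun x => ?_)
    simp only [hL, ← Real.exp_add]
    congr 1; ring
  rw [e]
  have hj := exp_jensen (hgi.add hLi) (μ := gaussianReal b 1) (by
    refine (hLe.const_mul (Real.exp C)).mono'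
      ((Real.measurable_exp.comp (hg.add (by fun_prop))).aestronglyMeasurable)
      (Filter.Eventually.of_forall fun x => ?_)
    rw [Pi.add_apply, Real.norm_eq_abs, abs_of_pos (Real.exp_pos _), Real.exp_add]
    refine mul_le_mul_of_nonneg_right (Real.exp_le_exp.2 ?_) (Real.exp_pos _).le
    exact (abs_le.1 (hC x)).2)
  refine le_trans (le_of_eq ?_) hj
  congr 1
  have := integral_add hgi hLi
  simp only [Pi.add_apply]
  rw [this, hLint]; ring

section Trunc

variable {Y : Type*} [MeasurableSpace Y]

def tr (X : Y → ℝ) (B : ℝ) (x0 : Y) : (n : ℕ) → (Fin n → Y) → (Fin n → Y)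
  | 0 => id
  | (n+1) => fun ω => snocM n (tr X B x0 n (Fin.init ω),
      if ∑ t, X (Fin.init ω t) < B then ω (Fin.last n) else x0)

lemma snocM_init (n : ℕ) (ω : Fin (n+1) → Y) : snocM n (Fin.init ω, ω (Fin.last n)) = ω :=
  Fin.snoc_init_self ω

lemma init_snocM (n : ℕ) (h : Fin n → Y) (x : Y) : Fin.init (snocM n (h, x)) = h :=
  Fin.init_snoc (α := fun _ => Y) x h

lemma last_snocM (n : ℕ) (h : Fin n → Y) (x : Y) : snocM n (h, x) (Fin.last n) = x :=
  Fin.snoc_last (α := fun _ => Y) x h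

lemma tr_snocM (X : Y → ℝ) (B : ℝ) (x0 : Y) (n : ℕ) (h : Fin n → Y) (x : Y) :
    tr X B x0 (n+1) (snocM n (h, x)) =
      snocM n (tr X B x0 n h, if ∑ t, X (h t) < B then x else x0) := by
  simp only [tr, init_snocM, last_snocM]

lemma measurable_sumX {X : Y → ℝ} (hX : Measurable X) (n : ℕ) :
    Measurable (fun ω : Fin n → Y => ∑ t, X (ω t)) :=
  Finset.measurable_sum _ (fun t _ => hX.comp (measurable_pi_apply t))

lemma measurableSet_act {X : Y → ℝ} (hX : Measurable X) (B : ℝ) (n : ℕ) :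
    MeasurableSet {h : Fin n → Y | ∑ t, X (h t) < B} :=
  measurableSet_lt (measurable_sumX hX n) measurable_const

lemma measurable_tr {X : Y → ℝ} (hX : Measurable X) (B : ℝ) (x0 : Y) (n : ℕ) :
    Measurable (tr X B x0 n) := by
  induction n with
  | zero => exact measurable_id
  | succ n ih =>
    have hi : Measurable (fun ω : Fin (n+1) → Y => (Fin.init ω : Fin n → Y)) := by
      rw [measurable_pi_iff]; intro i; exact measurable_pi_apply _
    refine (measurable_snocM n).comp ((ih.comp hi).prodMk ?_)
    refine Measurable.ite ?_ (measurable_pi_apply _) measurable_const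
    exact hi (measurableSet_act hX B n)

lemma tr_act {X : Y → ℝ} (hX0 : ∀ y, 0 ≤ X y) (B : ℝ) (x0 : Y) (n : ℕ) :
    ∀ ω : Fin n → Y, ∑ t, X (ω t) < B → tr X B x0 n ω = ω := by
  induction n with
  | zero => intro ω _; rfl
  | succ n ih =>
    intro ω hω
    rw [← snocM_init n ω] at hω ⊢
    rw [sum_snocM] at hω
    have h1 : ∑ t, X ((Fin.init ω : Fin n → Y) t) < B := by
      have := hX0 (ω (Fin.last n)); simp only at hω; linarith
    rw [tr_snocM, ih _ h1, if_pos h1]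

lemma tr_inact {X : Y → ℝ} (hX0 : ∀ y, 0 ≤ X y) (B : ℝ) (x0 : Y) (n : ℕ) :
    ∀ ω : Fin n → Y, ¬ ∑ t, X (ω t) < B → ¬ ∑ t, X (tr X B x0 n ω t) < B := by
  induction n with
  | zero => intro ω h; exact h
  | succ n ih =>
    intro ω hω
    rw [← snocM_init n ω] at hω ⊢
    rw [tr_snocM]
    by_cases h1 : ∑ t, X ((Fin.init ω : Fin n → Y) t) < B
    · rw [tr_act hX0 B x0 n _ h1, if_pos h1]; exact hω
    · rw [sum_snocM]
      have := ih _ h1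
      have := hX0 (if ∑ t, X ((Fin.init ω : Fin n → Y) t) < B then ω (Fin.last n) else x0)
      simp only; linarith

lemma tr_le {X : Y → ℝ} (hX0 : ∀ y, 0 ≤ X y) (hX1 : ∀ y, X y ≤ 1) (B : ℝ) (hB : 0 ≤ B) (x0 : Y)
    (η : ℝ) (hη : X x0 ≤ η) (n : ℕ) :
    ∀ ω : Fin n → Y, ∑ t, X (tr X B x0 n ω t) ≤ B + 1 + n * η := by
  have hη0 := (hX0 x0).trans hη
  induction n with
  | zero => intro ω; simp; linarith
  | succ n ih =>
    intro ω
    rw [← snocM_init n ω, tr_snocM, sum_snocM]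
    have hn : (0:ℝ) ≤ n * η := by positivity
    push_cast
    by_cases h1 : ∑ t, X ((Fin.init ω : Fin n → Y) t) < B
    · rw [tr_act hX0 B x0 n _ h1, if_pos h1]
      have := hX1 (ω (Fin.last n))
      linarith
    · rw [if_neg h1]
      have := ih (Fin.init ω)
      linarith

lemma tr_reg {X R D : Y → ℝ} (hX0 : ∀ y, 0 ≤ X y) (hR : ∀ y, 0 ≤ R y) (hD : ∀ y, 0 ≤ D y)
    (hRX : ∀ y, X y - D y ≤ R y) (B : ℝ) (x0 : Y) (n : ℕ) :
    ∀ ω : Fin n → Y, ¬ ∑ t, X (ω t) < B →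
      B - ∑ t, D (tr X B x0 n ω t) ≤ ∑ t, R (ω t) := by
  induction n with
  | zero => intro ω h; simp at h ⊢; linarith
  | succ n ih =>
    intro ω hω
    rw [← snocM_init n ω] at hω ⊢
    rw [tr_snocM]
    by_cases h1 : ∑ t, X ((Fin.init ω : Fin n → Y) t) < B
    · rw [tr_act hX0 B x0 n _ h1, if_pos h1]
      have : ∑ t, (X (snocM n (Fin.init ω, ω (Fin.last n)) t) -
          D (snocM n (Fin.init ω, ω (Fin.last n)) t)) ≤
          ∑ t, R (snocM n (Fin.init ω, ω (Fin.last n)) t) :=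
        Finset.sum_le_sum (fun t _ => hRX _)
      rw [Finset.sum_sub_distrib] at this
      linarith
    · rw [sum_snocM, sum_snocM]
      have h2 := ih _ h1
      have h3 := hR (ω (Fin.last n))
      have h4 := hD (if ∑ t, X ((Fin.init ω : Fin n → Y) t) < B then ω (Fin.last n) else x0)
      simp only; linarith

def trK {X : Y → ℝ} (hX : Measurable X) (B : ℝ) (x0 : Y) (κ : (n : ℕ) → Kernel (Fin n → Y) Y)
    (n : ℕ) : Kernel (Fin n → Y) Y :=
  Kernel.piecewise (measurableSet_act hX B n) (κ n) (Kernel.const _ (Measure.dirac x0))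

instance trK_markov {X : Y → ℝ} (hX : Measurable X) (B : ℝ) (x0 : Y)
    (κ : (n : ℕ) → Kernel (Fin n → Y) Y) [∀ n, IsMarkovKernel (κ n)] (n : ℕ) :
    IsMarkovKernel (trK hX B x0 κ n) := by
  unfold trK; infer_instance

lemma Law_succ_apply (κ : (n : ℕ) → Kernel (Fin n → Y) Y) [∀ n, IsMarkovKernel (κ n)] (n : ℕ)
    {s : Set (Fin (n+1) → Y)} (hs : MeasurableSet s) :
    Law κ (n+1) s = ∫⁻ h, κ n h {x | snocM n (h, x) ∈ s} ∂Law κ n := by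
  simp only [Law]
  rw [Measure.map_apply (measurable_snocM n) hs,
    Measure.compProd_apply (measurable_snocM n hs)]
  rfl

lemma map_tr {X : Y → ℝ} (hX : Measurable X) (hX0 : ∀ y, 0 ≤ X y) (B : ℝ) (x0 : Y)
    (κ : (n : ℕ) → Kernel (Fin n → Y) Y) [∀ n, IsMarkovKernel (κ n)] (n : ℕ) :
    (Law κ n).map (tr X B x0 n) = Law (trK hX B x0 κ) n := by
  induction n with
  | zero => simp [Law, tr]
  | succ n ih =>
    ext s hs
    rw [Measure.map_apply (measurable_tr hX B x0 _) hs,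
      Law_succ_apply κ n (measurable_tr hX B x0 _ hs), Law_succ_apply _ n hs, ← ih,
      lintegral_map _ (measurable_tr hX B x0 n)]
    · refine lintegral_congr fun h => ?_
      simp only [Set.mem_preimage, tr_snocM, trK, Kernel.piecewise_apply, Set.mem_ofPred_eq]
      by_cases h1 : ∑ t, X (h t) < B
      · rw [tr_act hX0 B x0 n _ h1]; simp only [if_pos h1]
      · simp only [if_neg h1, if_neg (tr_inact hX0 B x0 n _ h1), Kernel.const_apply]
        have hm : MeasurableSet {x | snocM n (tr X B x0 n h, x) ∈ s} :=
          ((measurable_snocM n).comp measurable_prodMk_left) hs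
        rw [Measure.dirac_apply' _ hm]
        by_cases h2 : snocM n (tr X B x0 n h, x0) ∈ s <;> simp [h2]
    · exact Kernel.measurable_kernel_prodMk_left (measurable_snocM n hs)

end Trunc

section Bandit

variable {P : Type*} [MeasurableSpace P]

def gK (f : P → ℝ) (hf : Measurable f) : Kernel P ℝ :=
  ⟨fun a => gaussianReal (f a) 1, measurable_gaussianReal.comp (hf.prodMk measurable_const)⟩

instance gK_markov (f : P → ℝ) (hf : Measurable f) : IsMarkovKernel (gK f hf) :=
  ⟨fun a => by show IsProbabilityMeasure (gaussianReal (f a) 1); infer_instance⟩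

def stepK (f : P → ℝ) (hf : Measurable f) (alg : (t : ℕ) → Kernel (Fin t → P × ℝ) P) (n : ℕ) :
    Kernel (Fin n → P × ℝ) (P × ℝ) := alg n ⊗ₖ Kernel.prodMkLeft _ (gK f hf)

instance stepK_markov (f : P → ℝ) (hf : Measurable f)
    (alg : (t : ℕ) → Kernel (Fin t → P × ℝ) P) [∀ t, IsMarkovKernel (alg t)] (n : ℕ) :
    IsMarkovKernel (stepK f hf alg n) := by
  unfold stepK; infer_instance

lemma traj_eq (f : P → ℝ) (hf : Measurable f)
    (alg : (t : ℕ) → Kernel (Fin t → P × ℝ) P) [∀ t, IsMarkovKernel (alg t)] (n : ℕ) :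
    trajMeasure f alg n = Law (stepK f hf alg) n := by
  induction n with
  | zero => rfl
  | succ n ih =>
    have inner : ∀ h : Fin n → P × ℝ, ((alg n h).bind fun a =>
        (gaussianReal (f a) 1).map fun r => (Fin.snoc h (a, r) : Fin (n+1) → P × ℝ))
        = (stepK f hf alg n h).map (fun x => snocM n (h, x)) := by
      intro h
      have hm : Measurable (fun x : P × ℝ => snocM n (h, x)) :=
        (measurable_snocM n).comp measurable_prodMk_left
      have e : ∀ s : Set (Fin (n+1) → P × ℝ), MeasurableSet s → ∀ a,
          (gaussianReal (f a) 1).map (fun r => (Fin.snoc h (a, r) : Fin (n+1) → P × ℝ)) s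
          = gK f hf a (Prod.mk a ⁻¹' ((fun x : P × ℝ => snocM n (h, x)) ⁻¹' s)) := by
        intro s hs a
        exact Measure.map_apply (hm.comp measurable_prodMk_left) hs
      have ma : Measurable (fun a => (gaussianReal (f a) 1).map
          fun r => (Fin.snoc h (a, r) : Fin (n+1) → P × ℝ)) := by
        refine Measure.measurable_of_measurable_coe _ fun s hs => ?_
        simp_rw [e s hs]
        exact Kernel.measurable_kernel_prodMk_left (hm hs)
      ext s hs
      rw [Measure.bind_apply hs ma.aemeasurable, Measure.map_apply hm hs, stepK,
        Kernel.compProd_apply (hm hs)]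
      refine lintegral_congr fun a => ?_
      rw [e s hs]; rfl
    have e2 : ∀ s : Set (Fin (n+1) → P × ℝ), MeasurableSet s → ∀ h,
        ((stepK f hf alg n h).map (fun x => snocM n (h, x))) s
          = stepK f hf alg n h (Prod.mk h ⁻¹' (snocM n ⁻¹' s)) := by
      intro s hs h
      exact Measure.map_apply ((measurable_snocM n).comp measurable_prodMk_left) hs
    have mh : Measurable (fun h => (stepK f hf alg n h).map (fun x => snocM n (h, x))) := by
      refine Measure.measurable_of_measurable_coe _ fun s hs => ?_
      simp_rw [e2 s hs]
      exact Kernel.measurable_kernel_prodMk_left (measurable_snocM n hs)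
    simp only [trajMeasure]
    simp_rw [inner]
    rw [ih]
    ext s hs
    rw [Measure.bind_apply hs mh.aemeasurable, Law_succ_apply _ n hs]
    refine lintegral_congr fun h => ?_
    rw [e2 s hs]; rfl

lemma bandit_step (f fb : P → ℝ) (hf : Measurable f) (hfb : Measurable fb)
    (hf1 : ∀ x, f x ∈ Set.Icc (0:ℝ) 1) (hfb1 : ∀ x, fb x ∈ Set.Icc (0:ℝ) 1)
    (alg : (t : ℕ) → Kernel (Fin t → P × ℝ) P) [∀ t, IsMarkovKernel (alg t)]
    (n : ℕ) (h : Fin n → P × ℝ) (g : P × ℝ → ℝ) (hg : Measurable g) (C : ℝ)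
    (hC : ∀ x, |g x| ≤ C) :
    Real.exp (∫ x, (g x - (f x.1 - fb x.1)^2 / 2) ∂stepK fb hfb alg n h) ≤
      ∫ x, Real.exp (g x) ∂stepK f hf alg n h := by
  have hcm : Measurable (fun a => (f a - fb a)^2 / 2) := by fun_prop
  have hcb : ∀ a, |(f a - fb a)^2 / 2| ≤ 1 := by
    intro a
    have h1 := hf1 a
    have h2 := hfb1 a
    rw [abs_of_nonneg (by positivity)]
    nlinarith [h1.1, h1.2, h2.1, h2.2]
  have hem : Measurable (fun x => Real.exp (g x)) := Real.measurable_exp.comp hg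
  have heb : ∀ x, |Real.exp (g x)| ≤ Real.exp C := fun x => by
    rw [abs_of_pos (Real.exp_pos _)]; exact Real.exp_le_exp.2 (abs_le.1 (hC x)).2
  have hdm : Measurable (fun x : P × ℝ => g x - (f x.1 - fb x.1)^2 / 2) :=
    hg.sub (hcm.comp measurable_fst)
  have hdb : ∀ x : P × ℝ, |g x - (f x.1 - fb x.1)^2 / 2| ≤ C + 1 := fun x =>
    (abs_sub _ _).trans (add_le_add (hC x) (hcb x.1))
  simp only [stepK]
  rw [integral_compProd (int_bdd hdm hdb), integral_compProd (int_bdd hem heb)]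
  simp only [Kernel.prodMkLeft_apply]
  have hu : Measurable (fun a => ∫ r, (g (a, r) - (f a - fb a)^2 / 2) ∂gK fb hfb a) :=
    measurable_kint (gK fb hfb) hdm
  have hub : ∀ a, |∫ r, (g (a, r) - (f a - fb a)^2 / 2) ∂gK fb hfb a| ≤ C + 1 := by
    intro a
    rw [abs_le]
    exact integral_bdd (hdm.comp measurable_prodMk_left) (fun r => abs_le.1 (hdb (a, r)))
  have hue : ∀ a, |Real.exp (∫ r, (g (a, r) - (f a - fb a)^2 / 2) ∂gK fb hfb a)|
      ≤ Real.exp (C + 1) := fun a => by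
    rw [abs_of_pos (Real.exp_pos _)]; exact Real.exp_le_exp.2 (abs_le.1 (hub a)).2
  refine (exp_jensen (int_bdd hu hub) (int_bdd (Real.measurable_exp.comp hu) hue)).trans ?_
  refine integral_mono (int_bdd (Real.measurable_exp.comp hu) hue)
    (int_bdd (C := Real.exp C) (measurable_kint (gK f hf) hem) ?_) ?_
  · intro a
    rw [abs_le]
    exact integral_bdd (hem.comp measurable_prodMk_left) (fun r => abs_le.1 (heb (a, r)))
  · intro a
    have := gauss_step (f a) (fb a) (fun r => g (a, r)) (hg.comp measurable_prodMk_left) C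
      (fun r => hC _)
    refine le_trans (le_of_eq ?_) this
    refine congrArg Real.exp ?_
    show ∫ r, (g (a, r) - (f a - fb a)^2 / 2) ∂gaussianReal (fb a) 1 = _
    have hgi : Integrable (fun r => g (a, r)) (gaussianReal (fb a) 1) :=
      int_bdd (hg.comp measurable_prodMk_left) (fun r => hC _)
    rw [integral_sub hgi (integrable_const _)]
    simp

lemma bandit_change (f fb : P → ℝ) (hf : Measurable f) (hfb : Measurable fb)
    (hf1 : ∀ x, f x ∈ Set.Icc (0:ℝ) 1) (hfb1 : ∀ x, fb x ∈ Set.Icc (0:ℝ) 1)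
    (alg : (t : ℕ) → Kernel (Fin t → P × ℝ) P) [∀ t, IsMarkovKernel (alg t)]
    {X : P × ℝ → ℝ} (hX : Measurable X) (B : ℝ) (x0 : P × ℝ)
    (n : ℕ) (g : (Fin n → P × ℝ) → ℝ) (hg : Measurable g) (C : ℝ)
    (hC : ∀ x, |g x| ≤ C) :
    Real.exp (∫ ω, (g ω - ∑ t, (f (ω t).1 - fb (ω t).1)^2 / 2)
        ∂Law (trK hX B x0 (stepK fb hfb alg)) n) ≤
      ∫ ω, Real.exp (g ω) ∂Law (trK hX B x0 (stepK f hf alg)) n := by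
  have hcm : Measurable (fun a => (f a - fb a)^2 / 2) := by fun_prop
  refine change_measure (trK hX B x0 (stepK f hf alg)) (trK hX B x0 (stepK fb hfb alg))
    (fun x => (f x.1 - fb x.1)^2 / 2) (hcm.comp measurable_fst) 1 ?_ ?_ n g hg ⟨C, hC⟩
  · intro x
    have h1 := hf1 x.1
    have h2 := hfb1 x.1
    rw [abs_of_nonneg (by positivity)]
    nlinarith [h1.1, h1.2, h2.1, h2.2]
  · rintro n h g hg ⟨C, hC⟩
    simp only [trK, Kernel.piecewise_apply, Set.mem_ofPred_eq]
    by_cases h1 : ∑ t, X (h t) < B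
    · simp only [if_pos h1]
      exact bandit_step f fb hf hfb hf1 hfb1 alg n h g hg C hC
    · simp only [if_neg h1, Kernel.const_apply]
      rw [integral_dirac' (fun x => Real.exp (g x)) _
          (Real.measurable_exp.comp hg).stronglyMeasurable,
        integral_dirac' (fun x : P × ℝ => g x - (f x.1 - fb x.1)^2 / 2) _
          (hg.sub (hcm.comp measurable_fst)).stronglyMeasurable]
      apply Real.exp_le_exp.2
      have : 0 ≤ (f x0.1 - fb x0.1)^2 / 2 := by positivity
      linarith

end Bandit

section Final

lemma prob_low {Ω : Type*} [MeasurableSpace Ω] (Q : Measure Ω) [IsProbabilityMeasure Q]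
    {V : Ω → ℝ} (hV : Measurable V) (hVi : Integrable V Q) {U : ℝ} (hU : ∀ᵐ ω ∂Q, V ω ≤ U)
    (c : ℝ) :
    c ≤ Q.real {ω | ∫ x, V x ∂Q - c ≤ V ω} * (U - ∫ x, V x ∂Q + c) := by
  set m := ∫ x, V x ∂Q with hm
  set G : Set Ω := {ω | m - c ≤ V ω} with hG
  have hGm : MeasurableSet G := measurableSet_le measurable_const hV
  have hind : Integrable (G.indicator (fun _ => (U - m + c : ℝ))) Q :=
    (integrable_const _).indicator hGm
  have h1 : m ≤ ∫ ω, (G.indicator (fun _ => (U - m + c : ℝ)) ω + (m - c)) ∂Q := by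
    rw [hm]
    refine integral_mono_ae hVi (hind.add (integrable_const _)) ?_
    filter_upwards [hU] with ω hω
    by_cases h : ω ∈ G
    · simp only [Set.indicator_of_mem h]; linarith
    · simp only [Set.indicator_of_notMem h]
      have : ¬ (m - c ≤ V ω) := h
      linarith
  rw [integral_add hind (integrable_const _), integral_indicator_const _ hGm] at h1
  simp only [integral_const, probReal_univ, smul_eq_mul, one_mul] at h1
  linarith

lemma exists_avg {P : Type*} [MeasurableSpace P] (T : ℕ) (hT : 1 ≤ T)
    (Q : Measure (Fin T → P × ℝ)) [IsProbabilityMeasure Q] :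
    ∃ p : ProbabilityMeasure P, ∀ φ : P → ℝ, Measurable φ → (∃ C, ∀ x, |φ x| ≤ C) →
      ∫ x, φ x ∂(p : Measure P) = (T:ℝ)⁻¹ * ∫ ω, ∑ t, φ (ω t).1 ∂Q := by
  have hm : ∀ t : Fin T, Measurable (fun ω : Fin T → P × ℝ => (ω t).1) := fun t =>
    measurable_fst.comp (measurable_pi_apply t)
  have hp : ∀ t : Fin T, IsProbabilityMeasure (Q.map (fun ω => (ω t).1)) := fun t =>
    Measure.isProbabilityMeasure_map (hm t).aemeasurable
  refine ⟨⟨(T:ℝ≥0∞)⁻¹ • ∑ t : Fin T, Q.map (fun ω => (ω t).1), ⟨?_⟩⟩, ?_⟩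
  · simp only [Measure.smul_apply, Measure.finsetSum_apply, measure_univ, smul_eq_mul]
    simp
    refine ENNReal.inv_mul_cancel ?_ (by simp)
    simp; omega
  · rintro φ hφ ⟨C, hC⟩
    simp only [ProbabilityMeasure.coe_mk]
    have hi : ∀ t ∈ Finset.univ, Integrable (fun ω : Fin T → P × ℝ => φ (ω t).1) Q :=
      fun t _ => int_bdd (hφ.comp (hm t)) (fun x => hC _)
    rw [integral_smul_measure, integral_finsetSum_measure
      (fun t _ => int_bdd hφ hC), integral_finsetSum _ hi]
    simp only [ENNReal.toReal_inv, ENNReal.toReal_natCast, smul_eq_mul]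
    congr 1
    refine Finset.sum_congr rfl fun t _ => ?_
    rw [integral_map (hm t).aemeasurable hφ.aestronglyMeasurable]

lemma prob_transfer {a b q : ℝ} (hb : b ≤ 1/648) (ha : 1/4 ≤ a)
    (h : Real.exp (a - b) ≤ 1 + (Real.exp 1 - 1) * q) (hq : 0 ≤ q) : 1/18 ≤ q := by
  have h1 := Real.add_one_le_exp (a - b)
  have h2 := Real.exp_one_lt_d9
  nlinarith

lemma integral_exp_ind {Ω : Type*} [MeasurableSpace Ω] (Q : Measure Ω) [IsProbabilityMeasure Q]
    {E : Set Ω} (hE : MeasurableSet E) :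
    ∫ ω, Real.exp (E.indicator (fun _ => (1:ℝ)) ω) ∂Q = 1 + (Real.exp 1 - 1) * Q.real E := by
  have : ∀ ω, Real.exp (E.indicator (fun _ => (1:ℝ)) ω)
      = 1 + E.indicator (fun _ => (Real.exp 1 - 1)) ω := by
    intro ω
    by_cases h : ω ∈ E <;> simp [h]
  simp_rw [this]
  rw [integral_add (integrable_const _) ((integrable_const _).indicator hE),
    integral_indicator_const _ hE]
  simp [mul_comm]

lemma bdd_of_Icc {P : Type*} {f : P → ℝ} (h : ∀ x, f x ∈ Set.Icc (0:ℝ) 1) :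
    BddAbove (Set.range f) := ⟨1, by rintro _ ⟨x, rfl⟩; exact (h x).2⟩

end Final

set_option maxHeartbeats 1000000

/-- **Remark 3 (exact-regret corollary).** With `Δ = dec^1_ε(F)` and `Δ ≥ 216 ε`,
for any algorithm there is a model `f ∈ F` with
`P^f[Reg(T) ≥ (Δ/2)T] ≥ 1/18`, and consequently `E^f[Reg(T)] ≥ (Δ/36)T`. -/
theorem exact_regret_lower_bound
    {P : Type*} [MeasurableSpace P] (F : Set (P → ℝ))
    (hF : ∀ f ∈ F, Measurable f ∧ ∀ x, f x ∈ Set.Icc (0:ℝ) 1)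
    (hFmax : ∀ f ∈ F, ∃ x, ∀ y, f y ≤ f x)
    (hsup : (⨆ f : F, ⨆ x, (f : P → ℝ) x) = 1)
    (T : ℕ) (hT : 1 ≤ T)
    (ε : ℝ) (hε1 : 4 / (T:ℝ) ≤ ε) (hε2 : ε ≤ 1 / (18 * Real.sqrt T))
    (hΔ : 216 * ε ≤ dec 1 ε F)
    (alg : (t : ℕ) → Kernel (Fin t → P × ℝ) P)
    (halg : ∀ t, IsMarkovKernel (alg t)) :
    ∃ f ∈ F,
      trajMeasure f alg T
          {ω | (dec 1 ε F / 2) * T ≤ ∑ t : Fin T, ((⨆ x, f x) - f (ω t).1)} ≥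
        1 / 18 ∧
      (dec 1 ε F / 36) * T ≤
        ∫ ω, (∑ t : Fin T, ((⨆ x, f x) - f (ω t).1)) ∂(trajMeasure f alg T) := by
  have := halg
  have hTpos : (0:ℝ) < T := by exact_mod_cast hT
  have hε : 0 < ε := lt_of_lt_of_le (by positivity) hε1
  have hTε : 4 ≤ ε * T := by rwa [div_le_iff₀ hTpos] at hε1
  have hTε2 : T * ε^2 ≤ 1/324 := by
    have hs : 0 < Real.sqrt T := Real.sqrt_pos.2 hTpos
    have hsq := Real.sq_sqrt hTpos.le
    rw [le_div_iff₀ (by positivity)] at hε2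
    have h0 : 0 ≤ ε * (18 * Real.sqrt T) := by positivity
    have h3 : (ε * (18 * Real.sqrt T))^2 ≤ 1 := by nlinarith
    have h4 : (ε * (18 * Real.sqrt T))^2 = 324 * (T * ε^2) := by
      rw [mul_pow, mul_pow, hsq]; ring
    linarith
  set Δ := dec 1 ε F with hΔdef
  have hFne : Nonempty F := by
    by_contra h
    rw [not_nonempty_iff] at h
    simp [Real.iSup_of_isEmpty] at hsup
  have hPne : Nonempty P := by
    obtain ⟨f, hf⟩ := hFne
    obtain ⟨x, _⟩ := hFmax f hf
    exact ⟨x⟩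
  -- reference model
  have : Nonempty {g : P → ℝ // Measurable g ∧ ∀ x, g x ∈ Set.Icc (0:ℝ) 1} :=
    ⟨⟨fun _ => 0, measurable_const, fun _ => by simp⟩⟩
  obtain ⟨⟨fb, hfb, hfb1⟩, hdec⟩ :=
    exists_lt_of_lt_ciSup (show Δ - ε/4 < dec 1 ε F by rw [← hΔdef]; linarith)
  simp only at hdec
  set sb := ⨆ x, fb x with hsb
  have hsble : ∀ x, fb x ≤ sb := fun x => le_ciSup (bdd_of_Icc hfb1) x
  have hsb1 : sb ≤ 1 := ciSup_le fun x => (hfb1 x).2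
  obtain ⟨pb, hpb⟩ := exists_lt_of_lt_ciSup (show sb - ε/4 < ⨆ x, fb x by rw [← hsb]; linarith)
  set X : P × ℝ → ℝ := fun y => sb - fb y.1 with hXdef
  have hX : Measurable X := measurable_const.sub (hfb.comp measurable_fst)
  have hX0 : ∀ y, 0 ≤ X y := fun y => sub_nonneg.2 (hsble _)
  have hX1 : ∀ y, X y ≤ 1 := fun y => by have := (hfb1 y.1).1; simp only [hXdef]; linarith
  set B := 2/3 * Δ * T with hB
  have hΔpos : 0 < Δ := by linarith
  have hB0 : 0 ≤ B := by positivity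
  set x0 : P × ℝ := (pb, 0) with hx0
  set Qb := Law (trK hX B x0 (stepK fb hfb alg)) T with hQb
  set V : (Fin T → P × ℝ) → ℝ := fun ω => ∑ t, X (ω t) with hV
  have hVm : Measurable V := measurable_sumX hX T
  have hV0 : ∀ ω, 0 ≤ V ω := fun ω => Finset.sum_nonneg fun t _ => hX0 _
  have hVT : ∀ ω, V ω ≤ T := fun ω => by
    refine (Finset.sum_le_sum (fun t _ => hX1 (ω t))).trans ?_; simp
  have hVi : Integrable V Qb := int_bdd hVm (fun ω => by rw [abs_of_nonneg (hV0 ω)]; exact hVT ω)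
  set U := (2/3 * Δ + ε/2) * T with hU
  have hVU : ∀ᵐ ω ∂Qb, V ω ≤ U := by
    rw [hQb, ← map_tr hX hX0 B x0 (stepK fb hfb alg) T,
      ae_map_iff (measurable_tr hX B x0 T).aemeasurable (measurableSet_le hVm measurable_const)]
    refine Filter.Eventually.of_forall fun ω => ?_
    have := tr_le hX0 hX1 B hB0 x0 (ε/4) (by simp only [hXdef, hx0]; linarith) T ω
    simp only [hV]
    refine this.trans ?_
    simp only [hB, hU]; nlinarith
  set m := ∫ ω, V ω ∂Qb with hm
  have hm0 : 0 ≤ m := integral_nonneg hV0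
  have hmU : m ≤ U := by
    have := integral_mono_ae hVi (integrable_const U) hVU
    simpa using this
  -- averaged action distribution
  obtain ⟨p, hp⟩ := exists_avg T hT Qb
  have hexf : ∃ f ∈ F ∪ {fb}, ∫ x, (f x - fb x)^2 ∂(p : Measure P) ≤ ε^2 ∧
      Δ - ε/4 < ∫ x, (1 * (⨆ y, f y) - f x) ∂(p : Measure P) := by
    have hall : ∀ f ∈ F ∪ {fb}, Measurable f ∧ ∀ x, f x ∈ Set.Icc (0:ℝ) 1 := by
      rintro f (h | h)
      · exact hF f h
      · rw [Set.mem_singleton_iff] at h; subst h; exact ⟨hfb, hfb1⟩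
    have h1 := lt_of_lt_of_le hdec (ciInf_le (by
      refine ⟨0, ?_⟩
      rintro _ ⟨p', rfl⟩
      refine Real.iSup_nonneg fun f => integral_nonneg fun x => ?_
      have := le_ciSup (bdd_of_Icc (hall _ f.2.1).2) x
      simp only [Pi.zero_apply]; linarith) p)
    have : Nonempty {f : P → ℝ // f ∈ F ∪ {fb} ∧
        ∫ x, (f x - fb x)^2 ∂(p : Measure P) ≤ ε^2} :=
      ⟨⟨fb, Or.inr rfl, by simp; positivity⟩⟩
    obtain ⟨f, hf⟩ := exists_lt_of_lt_ciSup h1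
    exact ⟨f.1, f.2.1, f.2.2, hf⟩
  obtain ⟨f, hfF, hfclose, hfreg⟩ := hexf
  -- the selected model is in the class
  have hpX : ∫ x, (sb - fb x) ∂(p : Measure P) = (T:ℝ)⁻¹ * m :=
    hp (fun x => sb - fb x) (measurable_const.sub hfb)
      ⟨1, fun x => by rw [abs_of_nonneg (hX0 (x, 0))]; exact hX1 (x, 0)⟩
  have hmT : (T:ℝ)⁻¹ * m ≤ 2/3 * Δ + ε/2 := by
    rw [inv_mul_le_iff₀ hTpos]; simp only [hU] at hmU; linarith
  have hfF' : f ∈ F := by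
    rcases hfF with h | h
    · exact h
    · exfalso
      rw [Set.mem_singleton_iff] at h
      subst h
      simp only [one_mul] at hfreg
      rw [hpX] at hfreg
      linarith
  obtain ⟨hf, hf1⟩ := hF f hfF'
  set sf := ⨆ x, f x with hsf
  have hsfle : ∀ x, f x ≤ sf := fun x => le_ciSup (bdd_of_Icc hf1) x
  have hsf1 : sf ≤ 1 := ciSup_le fun x => (hf1 x).2
  -- closeness in first moment
  have habsm : Measurable (fun x => |f x - fb x|) := (hf.sub hfb).abs
  have hsqm : Measurable (fun x => (f x - fb x)^2) := (hf.sub hfb).pow_const 2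
  have habs1 : ∀ x, |f x - fb x| ≤ 1 := fun x => by
    have h1 := hf1 x
    have h2 := hfb1 x
    rw [abs_le]; constructor <;> linarith [h1.1, h1.2, h2.1, h2.2]
  have habsb : ∀ x, |(|f x - fb x|)| ≤ 1 := fun x => by rw [abs_abs]; exact habs1 x
  have hsqb : ∀ x, |(f x - fb x)^2| ≤ 1 := fun x => by
    rw [abs_pow]; exact pow_le_one₀ (abs_nonneg _) (habs1 x)
  have hpabs : ∫ x, |f x - fb x| ∂(p : Measure P) ≤ ε := by
    have h1 : ∫ x, 2 * ε * |f x - fb x| ∂(p : Measure P) ≤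
        ∫ x, ((f x - fb x)^2 + ε^2) ∂(p : Measure P) := by
      refine integral_mono ((int_bdd habsm habsb).const_mul _)
        ((int_bdd hsqm hsqb).add (integrable_const _)) fun x => ?_
      have := sq_nonneg (|f x - fb x| - ε)
      have h2 := sq_abs (f x - fb x)
      simp only
      nlinarith
    rw [integral_const_mul, integral_add (int_bdd hsqm hsqb) (integrable_const _)] at h1
    simp only [integral_const, probReal_univ, smul_eq_mul, one_mul] at h1
    have : 2 * ε * ∫ x, |f x - fb x| ∂(p : Measure P) ≤ 2 * ε * ε := by nlinarith
    exact le_of_mul_le_mul_left this (by positivity)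
  have hgap : Δ - 5/4 * ε - (T:ℝ)⁻¹ * m ≤ sf - sb := by
    have h1 : ∫ x, (1 * sf - f x) ∂(p : Measure P) ≤
        ∫ x, ((sf - sb) + (sb - fb x) + |f x - fb x|) ∂(p : Measure P) := by
      have i1 : Integrable (fun x => 1 * sf - f x) (p : Measure P) :=
        (integrable_const _).sub (int_bdd hf (C := 1) fun x => by
          rw [abs_of_nonneg (hf1 x).1]; exact (hf1 x).2)
      have i2 : Integrable (fun x => sb - fb x) (p : Measure P) :=
        (integrable_const _).sub (int_bdd hfb (C := 1) fun x => by
          rw [abs_of_nonneg (hfb1 x).1]; exact (hfb1 x).2)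
      refine integral_mono i1 (((integrable_const _).add i2).add (int_bdd habsm habsb)) fun x => ?_
      have := neg_abs_le (f x - fb x)
      simp only; linarith
    have i2 : Integrable (fun x => sb - fb x) (p : Measure P) :=
      (integrable_const _).sub (int_bdd hfb (C := 1) fun x => by
        rw [abs_of_nonneg (hfb1 x).1]; exact (hfb1 x).2)
    have i3 : Integrable (fun x => (sf - sb) + (sb - fb x)) (p : Measure P) :=
      (integrable_const _).add i2
    rw [integral_add i3 (int_bdd habsm habsb), integral_add (integrable_const _) i2, hpX] at h1
    simp only [integral_const, probReal_univ, smul_eq_mul, one_mul] at h1 hfreg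
    linarith
  have hgap0 : sb ≤ sf := by linarith
  -- trajectory events
  set D : P × ℝ → ℝ := fun y => |f y.1 - fb y.1| with hD
  have hDm : Measurable D := habsm.comp measurable_fst
  set DD : (Fin T → P × ℝ) → ℝ := fun ω => ∑ t, D (ω t) with hDD
  have hDDm : Measurable DD := measurable_sumX hDm T
  have hDD0 : ∀ ω, 0 ≤ DD ω := fun ω => Finset.sum_nonneg fun t _ => abs_nonneg _
  have hDDT : ∀ ω, DD ω ≤ T := fun ω => by
    refine (Finset.sum_le_sum (fun t _ => habs1 (ω t).1)).trans ?_; simp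
  have hDDi : Integrable DD Qb :=
    int_bdd hDDm (fun ω => by rw [abs_of_nonneg (hDD0 ω)]; exact hDDT ω)
  have hDDint : ∫ ω, DD ω ∂Qb ≤ T * ε := by
    have h1 := hp (fun x => |f x - fb x|) habsm ⟨1, habsb⟩
    rw [h1, inv_mul_le_iff₀ hTpos] at hpabs
    exact hpabs
  set G1 : Set (Fin T → P × ℝ) := {ω | m - T * Δ / 3 ≤ V ω} with hG1
  set G2 : Set (Fin T → P × ℝ) := {ω | 16 * (T * ε) ≤ DD ω} with hG2
  have hG1m : MeasurableSet G1 := measurableSet_le measurable_const hVm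
  have hG2m : MeasurableSet G2 := measurableSet_le measurable_const hDDm
  have hq1 : 32/100 ≤ Qb.real G1 := by
    have h1 := prob_low Qb hVm hVi hVU (T * Δ / 3)
    rw [← hm, ← hG1] at h1
    have hq0 : 0 ≤ Qb.real G1 := measureReal_nonneg
    have h2 : U - m + T * Δ / 3 ≤ (1 + 1/432) * (T * Δ) := by
      simp only [hU]; nlinarith
    have h3 := h1.trans (mul_le_mul_of_nonneg_left h2 hq0)
    have h4 : 0 < T * Δ := by positivity
    have h5 : (T * Δ) * (1/3) ≤ (T * Δ) * (Qb.real G1 * (1 + 1/432)) := by linarith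
    have h6 := le_of_mul_le_mul_left h5 h4
    linarith
  have hq2 : Qb.real G2 ≤ 1/16 := by
    have h1 := mul_meas_ge_le_integral_of_nonneg (μ := Qb)
      (Filter.Eventually.of_forall hDD0) hDDi (16 * (T * ε))
    have h2 : (T * ε) * (16 * Qb.real G2) ≤ (T * ε) * 1 := by
      have : 16 * (T * ε) * Qb.real G2 ≤ T * ε := h1.trans hDDint
      linarith
    have h3 := le_of_mul_le_mul_left h2 (by positivity)
    linarith
  set E0 := G1 \ G2 with hE0
  have hE0m : MeasurableSet E0 := hG1m.diff hG2m
  have hQE0 : 1/4 ≤ Qb.real E0 := by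
    have := le_measureReal_sdiff (μ := Qb) (s₁ := G1) (s₂ := G2)
    linarith
  -- change of measure
  have hQf : 1/18 ≤ (Law (trK hX B x0 (stepK f hf alg)) T).real E0 := by
    have h1 := bandit_change f fb hf hfb hf1 hfb1 alg hX B x0 T (E0.indicator (fun _ => (1:ℝ)))
      (measurable_const.indicator hE0m) 1 (fun ω => by
        by_cases h : ω ∈ E0 <;> simp [h])
    rw [integral_exp_ind _ hE0m] at h1
    have hc1 : Measurable (fun x => (f x - fb x)^2 / 2) := hsqm.div_const 2
    have hc2 : ∀ x, |(f x - fb x)^2 / 2| ≤ 1 := fun x => by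
      rw [abs_div, abs_two]; have := hsqb x; linarith
    have h2 := hp (fun x => (f x - fb x)^2 / 2) hc1 ⟨1, hc2⟩
    rw [integral_div] at h2
    have hci : Integrable (fun ω : Fin T → P × ℝ => ∑ t, (f (ω t).1 - fb (ω t).1)^2 / 2) Qb :=
      integrable_finsetSum _ fun t _ =>
        int_bdd (hc1.comp (measurable_fst.comp (measurable_pi_apply t))) (fun ω => hc2 _)
    rw [integral_sub ((integrable_const _).indicator hE0m) hci,
      integral_indicator_const _ hE0m, smul_eq_mul, mul_one] at h1
    refine prob_transfer ?_ hQE0 h1 measureReal_nonneg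
    have h3 : ∫ ω, ∑ t, (f (ω t).1 - fb (ω t).1)^2 / 2 ∂Qb =
        T * ((∫ x, (f x - fb x)^2 ∂(p : Measure P)) / 2) := by
      rw [h2]; field_simp
    rw [h3]
    have h4 := mul_le_mul_of_nonneg_left hfclose hTpos.le
    linarith
  -- deterministic inclusion
  have hdet : ∀ ω : Fin T → P × ℝ, tr X B x0 T ω ∈ E0 →
      (Δ / 2) * T ≤ ∑ t : Fin T, (sf - f (ω t).1) := by
    rintro ω ⟨h1, h2⟩
    have h2' : DD (tr X B x0 T ω) < 16 * (T * ε) := not_le.1 h2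
    have h1' : m - T * Δ / 3 ≤ V (tr X B x0 T ω) := h1
    have hTΔ : T * (216 * ε) ≤ T * Δ := mul_le_mul_of_nonneg_left hΔ hTpos.le
    by_cases hact : ∑ t, X (ω t) < B
    · rw [tr_act hX0 B x0 T ω hact] at h1' h2'
      have h3 : ∑ t : Fin T, ((sf - sb) + X (ω t) - D (ω t)) ≤
          ∑ t : Fin T, (sf - f (ω t).1) := by
        refine Finset.sum_le_sum fun t _ => ?_
        have := le_abs_self (f (ω t).1 - fb (ω t).1)
        simp only [hXdef, hD]; linarith
      rw [Finset.sum_sub_distrib, Finset.sum_add_distrib] at h3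
      simp only [Finset.sum_const, Finset.card_univ, Fintype.card_fin, nsmul_eq_mul] at h3
      have h4 : (T:ℝ) * (Δ - 5/4 * ε - (T:ℝ)⁻¹ * m) ≤ T * (sf - sb) :=
        mul_le_mul_of_nonneg_left hgap hTpos.le
      have h5 : (T:ℝ) * (Δ - 5/4 * ε - (T:ℝ)⁻¹ * m) = T * Δ - 5/4 * (T * ε) - m := by
        field_simp
      have h6 : 0 < T * ε := by positivity
      simp only [hV, hDD] at h1' h2'
      linarith
    · have h3 := tr_reg (R := fun y => sf - f y.1) (D := D) hX0
        (fun y => sub_nonneg.2 (hsfle _)) (fun y => abs_nonneg _) (fun y => by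
          have := le_abs_self (f y.1 - fb y.1)
          simp only [hXdef, hD]; linarith) B x0 T ω hact
      have h6 : 0 < T * ε := by positivity
      simp only [hDD] at h2'
      simp only [hB] at h3
      linarith
  have hprob : trajMeasure f alg T
      {ω | (Δ / 2) * T ≤ ∑ t : Fin T, (sf - f (ω t).1)} ≥ 1 / 18 := by
    rw [traj_eq f hf alg T]
    have h1 : Law (trK hX B x0 (stepK f hf alg)) T E0 ≤
        Law (stepK f hf alg) T {ω | (Δ / 2) * T ≤ ∑ t : Fin T, (sf - f (ω t).1)} := by
      rw [← map_tr hX hX0 B x0 (stepK f hf alg) T,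
        Measure.map_apply (measurable_tr hX B x0 T) hE0m]
      exact measure_mono fun ω hω => hdet ω hω
    refine ge_iff_le.2 (le_trans ?_ h1)
    have h2 : ENNReal.ofReal (1/18) ≤ Law (trK hX B x0 (stepK f hf alg)) T E0 := by
      rw [← ofReal_measureReal (μ := Law (trK hX B x0 (stepK f hf alg)) T) (s := E0)]
      exact ENNReal.ofReal_le_ofReal hQf
    refine le_trans (le_of_eq ?_) h2
    rw [ENNReal.ofReal_div_of_pos (by norm_num)]
    simp
  refine ⟨f, hfF', hprob, ?_⟩
  have : IsProbabilityMeasure (trajMeasure f alg T) := by rw [traj_eq f hf alg T]; infer_instance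
  have hR0 : ∀ y : P × ℝ, 0 ≤ sf - f y.1 := fun y => sub_nonneg.2 (hsfle _)
  have hRm : Measurable (fun y : P × ℝ => sf - f y.1) :=
    measurable_const.sub (hf.comp measurable_fst)
  have hRR0 : ∀ ω : Fin T → P × ℝ, 0 ≤ ∑ t : Fin T, (sf - f (ω t).1) := fun ω =>
    Finset.sum_nonneg fun t _ => hR0 _
  have hRi : Integrable (fun ω : Fin T → P × ℝ => ∑ t : Fin T, (sf - f (ω t).1))
      (trajMeasure f alg T) := by
    refine integrable_finsetSum _ fun t _ =>
      int_bdd (C := 1) (hRm.comp (measurable_pi_apply t)) (fun ω => ?_)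

    rw [abs_of_nonneg (hR0 (ω t))]
    have := (hf1 (ω t).1).1
    linarith
  have hmk := mul_meas_ge_le_integral_of_nonneg (μ := trajMeasure f alg T)
    (Filter.Eventually.of_forall hRR0) hRi ((Δ / 2) * T)
  have hreal : 1/18 ≤ (trajMeasure f alg T).real
      {ω | (Δ / 2) * T ≤ ∑ t : Fin T, (sf - f (ω t).1)} := by
    have := ENNReal.toReal_mono (measure_ne_top _ _) (ge_iff_le.1 hprob)
    simpa [measureReal_def] using this
  have hpos : 0 ≤ (Δ / 2) * T := by positivity
  have := mul_le_mul_of_nonneg_left hreal hpos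
  linarith

end
end

section
/- Regret lower bound for the Example (Proposition 2, second part). Assume 180·T ≤ exp(d/8), K ≤ 20T, K ≥ 6000/γ², and T ≥ 144. Then for any algorithm {p_t}_{t=1}^T there exists a model M ∈ M̃ such that, with probability at least 1/3 over the randomness of the algorithm and the variance-1 Gaussian reward noise under ground truth M, Reg_γ(T) := Σ_{t=1}^T (γ·max_{(π',π)∈Π} f_M(π',π) − f_M(π'_t,π_t)) ≥ (γ/10)·√(K·T). -/
open MeasureTheory ProbabilityTheory
open scoped ENNReal NNReal

noncomputable section

def sgn (b : Bool) : ℝ := if b then 1 else -1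

/-- Inner product of two sign vectors in `{−1,1}^d`, encoded by `Fin d → Bool`. -/
def ip {d : ℕ} (w x : Fin d → Bool) : ℝ := ∑ i, sgn (w i) * sgn (x i)

/-- The action set `({−1,1}^d ∪ {⊥}) × [K]`; `none` plays the role of `⊥`. -/
abbrev ExAct (d K : ℕ) := Option (Fin d → Bool) × Fin K

instance (d K : ℕ) : MeasurableSpace (ExAct d K) := ⊤

/-- `h_w(π') = (2/d)·max(0, ⟨π',w⟩ − d/2)` with `h_w(⊥) = 0`. -/
def hfun {d : ℕ} (w : Fin d → Bool) : Option (Fin d → Bool) → ℝ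
  | none => 0
  | some x => (2 / (d:ℝ)) * max 0 (ip x w - d/2)

/-- Mean reward of the model `(w,k)` of the subclass `M̃`: `v_k = 1` and
`v_j = 1 − √(K/(20T))` for `j ≠ k`. -/
def fEx (d K T : ℕ) (γ : ℝ) (w : Fin d → Bool) (k : Fin K) : ExAct d K → ℝ :=
  fun a => (1 - γ) * hfun w a.1 +
    γ * (if a.2 = k then 1 else 1 - Real.sqrt ((K:ℝ) / (20 * (T:ℝ))))

lemma lintegral_step {P : Type*} [MeasurableSpace P] [Fintype P] [DiscreteMeasurableSpace P]
    (f : P → ℝ) {n : ℕ} (κ : Kernel (Fin n → P × ℝ) P) (h : Fin n → P × ℝ)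
    (F : (Fin (n+1) → P × ℝ) → ℝ≥0∞) (hF : Measurable F) :
    ∫⁻ ω, F ω ∂((κ h).bind fun a => (gaussianReal (f a) 1).map fun r => (Fin.snoc h (a, r) : Fin (n+1) → P × ℝ))
     = ∑ a, (∫⁻ r, F (Fin.snoc h (a, r)) ∂(gaussianReal (f a) 1)) * κ h {a} := by
  have hs : ∀ a : P, Measurable fun r : ℝ => (Fin.snoc h (a, r) : Fin (n+1) → P × ℝ) := by
    intro a
    rw [measurable_pi_iff]
    intro i
    refine Fin.lastCases ?_ (fun j => ?_) i
    · simp only [Fin.snoc_last]; fun_prop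
    · simp only [Fin.snoc_castSucc]; fun_prop
  rw [Measure.lintegral_bind (Measurable.of_discrete).aemeasurable hF.aemeasurable]
  rw [lintegral_fintype]
  refine Finset.sum_congr rfl fun a _ => ?_
  rw [lintegral_map hF (hs a)]

lemma meas_snoc {P : Type*} [MeasurableSpace P] {n : ℕ} (a : P) :
    Measurable fun p : (Fin n → P × ℝ) × ℝ => (Fin.snoc p.1 (a, p.2) : Fin (n+1) → P × ℝ) := by
  rw [measurable_pi_iff]
  intro i
  refine Fin.lastCases ?_ (fun j => ?_) i
  · simp only [Fin.snoc_last]; fun_prop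
  · simp only [Fin.snoc_castSucc]; fun_prop

lemma meas_rhs {P : Type*} [MeasurableSpace P] [Fintype P] [DiscreteMeasurableSpace P]
    (f : P → ℝ) {n : ℕ} (κ : Kernel (Fin n → P × ℝ) P)
    (F : (Fin (n+1) → P × ℝ) → ℝ≥0∞) (hF : Measurable F) :
    Measurable fun h => ∑ a, (∫⁻ r, F (Fin.snoc h (a, r)) ∂(gaussianReal (f a) 1)) * κ h {a} := by
  refine Finset.measurable_sum _ fun a _ => ?_
  refine Measurable.mul ?_ (Kernel.measurable_coe κ (MeasurableSet.singleton a))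
  exact Measurable.lintegral_prod_right' (f := fun p : (Fin n → P × ℝ) × ℝ => F (Fin.snoc p.1 (a, p.2)))
    (hF.comp (meas_snoc a))

lemma lintegral_traj_succ {P : Type*} [MeasurableSpace P] [Fintype P] [DiscreteMeasurableSpace P]
    (f : P → ℝ) (alg : (t : ℕ) → Kernel (Fin t → P × ℝ) P) (n : ℕ)
    (F : (Fin (n+1) → P × ℝ) → ℝ≥0∞) (hF : Measurable F) :
    ∫⁻ ω, F ω ∂(trajMeasure f alg (n+1)) =
      ∫⁻ h, ∑ a, (∫⁻ r, F (Fin.snoc h (a, r)) ∂(gaussianReal (f a) 1)) * alg n h {a}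
        ∂(trajMeasure f alg n) := by
  rw [trajMeasure, Measure.lintegral_bind _ hF.aemeasurable]
  · simp_rw [lintegral_step f (alg n) _ F hF]
  · refine (Measure.measurable_of_measurable_coe _ fun s hs => ?_).aemeasurable
    have h1 : Measurable (s.indicator (1 : (Fin (n+1) → P × ℝ) → ℝ≥0∞)) :=
      measurable_one.indicator hs
    convert meas_rhs f (alg n) _ h1 using 2 with h
    rw [← lintegral_step f (alg n) h _ h1, lintegral_indicator_one hs]

lemma gauss_change (μ ν : ℝ) (F : ℝ → ℝ≥0∞) (hF : Measurable F) :
    ∫⁻ r, F r ∂(gaussianReal μ 1) =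
      ∫⁻ r, F r * ENNReal.ofReal (Real.exp ((μ-ν)*(r-ν) - (μ-ν)^2/2)) ∂(gaussianReal ν 1) := by
  rw [gaussianReal_of_var_ne_zero _ one_ne_zero, gaussianReal_of_var_ne_zero _ one_ne_zero]
  rw [lintegral_withDensity_eq_lintegral_mul _ (measurable_gaussianPDF _ _) hF,
    lintegral_withDensity_eq_lintegral_mul _ (measurable_gaussianPDF _ _) (by fun_prop)]
  refine lintegral_congr fun r => ?_
  simp only [Pi.mul_apply]
  rw [mul_comm (F r), ← mul_assoc]
  congr 1
  rw [gaussianPDF, gaussianPDF, ← ENNReal.ofReal_mul (gaussianPDFReal_nonneg _ _ _)]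
  congr 1
  rw [gaussianPDFReal, gaussianPDFReal, mul_assoc _ (Real.exp _) (Real.exp _), ← Real.exp_add]
  congr 2
  push_cast
  ring

/-- log likelihood ratio -/
def likr {P : Type*} (f g : P → ℝ) {n : ℕ} (ω : Fin n → P × ℝ) : ℝ :=
  ∑ t, ((f (ω t).1 - g (ω t).1) * ((ω t).2 - g (ω t).1) - (f (ω t).1 - g (ω t).1)^2/2)

lemma measurable_likr {P : Type*} [MeasurableSpace P] [DiscreteMeasurableSpace P]
    (f g : P → ℝ) {n : ℕ} : Measurable (likr f g (n := n)) := by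
  have hf : Measurable f := Measurable.of_discrete
  have hg : Measurable g := Measurable.of_discrete
  unfold likr
  fun_prop

lemma traj_change {P : Type*} [MeasurableSpace P] [Fintype P] [DiscreteMeasurableSpace P]
    (f g : P → ℝ) (alg : (t : ℕ) → Kernel (Fin t → P × ℝ) P) (n : ℕ) :
    ∀ (F : (Fin n → P × ℝ) → ℝ≥0∞) (_ : Measurable F),
    ∫⁻ ω, F ω ∂(trajMeasure f alg n) =
      ∫⁻ ω, F ω * ENNReal.ofReal (Real.exp (likr f g ω)) ∂(trajMeasure g alg n) := by
  induction n with
  | zero => intro F hF; simp [trajMeasure, likr]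
  | succ n ih =>
    intro F hF
    have hm := measurable_likr f g (n := n+1)
    rw [lintegral_traj_succ f alg n F hF, lintegral_traj_succ g alg n _ (by fun_prop),
      ih _ (meas_rhs f (alg n) F hF)]
    refine lintegral_congr fun h => ?_
    rw [Finset.sum_mul]
    refine Finset.sum_congr rfl fun a _ => ?_
    have hFs : Measurable fun r : ℝ => F (Fin.snoc h (a, r)) :=
      hF.comp ((meas_snoc a).comp (measurable_prodMk_left (x := h)))
    rw [gauss_change (f a) (g a) _ hFs, mul_right_comm]
    congr 1
    have hE : Measurable fun r : ℝ =>
        ENNReal.ofReal (Real.exp ((f a - g a) * (r - g a) - (f a - g a)^2/2)) := by fun_prop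
    rw [← lintegral_mul_const _ (show Measurable fun r : ℝ => F (Fin.snoc h (a, r)) *
        ENNReal.ofReal (Real.exp ((f a - g a) * (r - g a) - (f a - g a)^2/2)) from hFs.mul hE)]
    refine lintegral_congr fun r => ?_
    rw [mul_assoc, ← ENNReal.ofReal_mul (Real.exp_nonneg _), ← Real.exp_add]
    congr 3
    rw [likr, likr, Fin.sum_univ_castSucc]
    simp only [Fin.snoc_castSucc, Fin.snoc_last]
    ring

lemma traj_prob {P : Type*} [MeasurableSpace P] [Fintype P] [DiscreteMeasurableSpace P]
    (f : P → ℝ) (alg : (t : ℕ) → Kernel (Fin t → P × ℝ) P) [∀ t, IsMarkovKernel (alg t)] (n : ℕ) :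
    IsProbabilityMeasure (trajMeasure f alg n) := by
  induction n with
  | zero => rw [trajMeasure]; infer_instance
  | succ n ih =>
    constructor
    rw [← lintegral_one, lintegral_traj_succ f alg n _ measurable_const]
    simp

/-- Core lower bound. -/
lemma core {P : Type*} [MeasurableSpace P] [Fintype P] [DiscreteMeasurableSpace P]
    (f f' g : P → ℝ) (alg : (t : ℕ) → Kernel (Fin t → P × ℝ) P) [∀ t, IsMarkovKernel (alg t)] (n : ℕ)
    (A : Set (Fin n → P × ℝ)) (hA : MeasurableSet A)
    (hAf : ∀ ω ∈ A, -(1/5) ≤ likr f g ω + likr f' g ω) :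
    trajMeasure g alg n A ≤ trajMeasure f alg n A + ENNReal.ofReal (5/16) := by
  have hp := traj_prob f' alg n
  have h1 : Measurable (A.indicator (1 : (Fin n → P × ℝ) → ℝ≥0∞)) := measurable_one.indicator hA
  have m1 := measurable_likr f g (n := n)
  have m2 := measurable_likr f' g (n := n)
  have e1 := traj_change f g alg n _ h1
  have e2 := traj_change f' g alg n (fun _ => ENNReal.ofReal (5/16)) measurable_const
  rw [lintegral_indicator_one hA] at e1
  rw [lintegral_const, measure_univ, mul_one] at e2
  rw [e1, e2, ← lintegral_indicator_one hA, ← lintegral_add_left (by fun_prop)]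
  refine lintegral_mono fun ω => ?_
  by_cases hω : ω ∈ A
  · simp only [Set.indicator_of_mem hω, Pi.one_apply, one_mul]
    rw [← ENNReal.ofReal_mul (by norm_num), ← ENNReal.ofReal_add (by positivity) (by positivity),
      ENNReal.one_le_ofReal]
    have hL := Real.exp_pos (likr f g ω)
    have hW := Real.exp_pos (likr f' g ω)
    have hLW : 4/5 ≤ Real.exp (likr f g ω) * Real.exp (likr f' g ω) := by
      rw [← Real.exp_add]
      have := Real.add_one_le_exp (likr f g ω + likr f' g ω)
      linarith [hAf ω hω]
    nlinarith [sq_nonneg (Real.exp (likr f g ω) - 5/16 * Real.exp (likr f' g ω))]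
  · simp [Set.indicator_of_notMem hω]

lemma count_bound {d : ℕ} (x : Fin d → Bool) :
    ∑ w : Fin d → Bool, (if (d:ℝ)/2 < ip x w then (1:ℝ) else 0) ≤ 2^d * Real.exp (-(d:ℝ)/8) := by
  calc _ ≤ ∑ w : Fin d → Bool, Real.exp (-(d:ℝ)/4) * ∏ i, Real.exp (1/2 * (sgn (x i) * sgn (w i))) := by
        refine Finset.sum_le_sum fun w _ => ?_
        rw [← Real.exp_sum, ← Real.exp_add, ← Finset.mul_sum]
        split_ifs with h
        · apply Real.one_le_exp
          unfold ip at h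
          linarith
        · positivity
    _ = Real.exp (-(d:ℝ)/4) * ∏ i : Fin d, ∑ b : Bool, Real.exp (1/2 * (sgn (x i) * sgn b)) := by
        rw [← Finset.mul_sum, Finset.prod_univ_sum, Fintype.piFinset_univ]
    _ ≤ Real.exp (-(d:ℝ)/4) * ∏ i : Fin d, (2 * Real.exp (1/8)) := by
        gcongr with i
        have := Real.cosh_le_exp_half_sq (1/2)
        rw [Real.cosh_eq] at this
        norm_num at this
        cases x i <;> simp [sgn] <;> norm_num <;> linarith
    _ = _ := by
        rw [Finset.prod_const, Finset.card_univ, Fintype.card_fin, mul_pow, ← Real.exp_nat_mul,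
          mul_left_comm, ← Real.exp_add]
        ring_nf

lemma exists_small {Ω ι : Type*} [MeasurableSpace Ω] [Fintype ι] [Nonempty ι]
    (P : Measure Ω) [IsProbabilityMeasure P] (B : ι → Set Ω) (hB : ∀ i, MeasurableSet (B i))
    (c : ℝ) (hc : ∀ ω, ∑ i, (B i).indicator (1 : Ω → ℝ) ω ≤ Fintype.card ι * c) :
    ∃ i, P.real (B i) ≤ c := by
  have hint : ∀ i, Integrable ((B i).indicator (1 : Ω → ℝ)) P := fun i =>
    (integrable_const (1:ℝ)).indicator (hB i)
  have h1 : ∑ i, P.real (B i) ≤ ∑ _i : ι, c := by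
    calc ∑ i, P.real (B i) = ∑ i, ∫ ω, (B i).indicator (1 : Ω → ℝ) ω ∂P := by
          refine Finset.sum_congr rfl fun i _ => ?_
          rw [integral_indicator_one (hB i)]
      _ = ∫ ω, ∑ i, (B i).indicator (1 : Ω → ℝ) ω ∂P := by
          rw [integral_finsetSum _ fun i _ => hint i]
      _ ≤ ∫ _ω, (Fintype.card ι * c : ℝ) ∂P :=
          integral_mono (integrable_finsetSum _ fun i _ => hint i) (integrable_const _) hc
      _ = ∑ _i : ι, c := by simp
  obtain ⟨i, _, hi⟩ := Finset.exists_le_of_sum_le Finset.univ_nonempty h1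
  exact ⟨i, hi⟩

instance discExAct (d K : ℕ) : DiscreteMeasurableSpace (ExAct d K) := ⟨fun _ => trivial⟩

/-- number of pulls of arm `k` -/
def Npull {d K T : ℕ} (k : Fin K) (ω : Fin T → ExAct d K × ℝ) : ℝ :=
  ∑ t, if (ω t).1.2 = k then 1 else 0

lemma measurable_Npull {d K T : ℕ} (k : Fin K) : Measurable (Npull (d := d) (T := T) k) := by
  have : Measurable fun a : ExAct d K => if a.2 = k then (1:ℝ) else 0 := Measurable.of_discrete
  unfold Npull
  refine Finset.measurable_sum _ fun t _ => ?_
  exact this.comp (measurable_fst.comp (measurable_pi_apply t))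

/-- trajectories on which some `h_w` is nonzero -/
def Hit {d K T : ℕ} (w : Fin d → Bool) : Set (Fin T → ExAct d K × ℝ) :=
  {ω | ∃ t, hfun w (ω t).1.1 ≠ 0}

lemma measurable_Hit {d K T : ℕ} (w : Fin d → Bool) : MeasurableSet (Hit (K := K) (T := T) w) := by
  have : Hit (K := K) (T := T) w = ⋃ t, (fun ω => (ω t).1) ⁻¹' {a | hfun w a.1 ≠ 0} := by
    ext ω; simp [Hit]
  rw [this]
  refine MeasurableSet.iUnion fun t => ?_
  exact (measurable_fst.comp (measurable_pi_apply t)) (MeasurableSet.of_discrete)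

lemma sum_hit {d : ℕ} (o : Option (Fin d → Bool)) :
    ∑ w : Fin d → Bool, (if hfun w o ≠ 0 then (1:ℝ) else 0) ≤ 2^d * Real.exp (-(d:ℝ)/8) := by
  cases o with
  | none => simp [hfun]; positivity
  | some x =>
    refine le_trans (Finset.sum_le_sum fun w _ => ?_) (count_bound x)
    by_cases h : (d:ℝ)/2 < ip x w
    · rw [if_pos h]; split_ifs <;> norm_num
    · have : hfun w (some x) = 0 := by
        simp only [hfun]
        rw [max_eq_left (by linarith), mul_zero]
      simp [this, h]

lemma exists_w {d K T : ℕ} (P : Measure (Fin T → ExAct d K × ℝ)) [IsProbabilityMeasure P]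
    (hdT : 180 * (T:ℝ) ≤ Real.exp ((d:ℝ) / 8)) :
    ∃ w : Fin d → Bool, P.real (Hit w) ≤ 1/180 := by
  refine exists_small P _ measurable_Hit _ fun ω => ?_
  calc ∑ w, (Hit w).indicator (1 : (Fin T → ExAct d K × ℝ) → ℝ) ω
      ≤ ∑ w : Fin d → Bool, ∑ t, (if hfun w (ω t).1.1 ≠ 0 then (1:ℝ) else 0) := by
        refine Finset.sum_le_sum fun w _ => ?_
        by_cases h : ω ∈ Hit w
        · rw [Set.indicator_of_mem h]
          obtain ⟨t, ht⟩ := h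
          refine le_trans ?_ (Finset.single_le_sum (fun i _ => ?_) (Finset.mem_univ t))
          · simp [ht]
          · split_ifs <;> norm_num
        · rw [Set.indicator_of_notMem h]
          exact Finset.sum_nonneg fun i _ => by split_ifs <;> norm_num
    _ = ∑ t, ∑ w : Fin d → Bool, (if hfun w (ω t).1.1 ≠ 0 then (1:ℝ) else 0) := Finset.sum_comm
    _ ≤ ∑ _t : Fin T, 2^d * Real.exp (-(d:ℝ)/8) := Finset.sum_le_sum fun t _ => sum_hit _
    _ = 2^d * (T * Real.exp (-(d:ℝ)/8)) := by simp; ring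
    _ ≤ _ := by
        simp only [Fintype.card_pi, Fintype.card_bool, Finset.prod_const, Finset.card_univ,
          Fintype.card_fin]
        push_cast
        gcongr
        have : Real.exp (-(d:ℝ)/8) * Real.exp ((d:ℝ)/8) = 1 := by
          rw [← Real.exp_add]; ring_nf; simp
        nlinarith [Real.exp_pos (-(d:ℝ)/8)]

lemma exists_k {d K T : ℕ} (hK : 0 < K) (hT : 0 < T)
    (P : Measure (Fin T → ExAct d K × ℝ)) [IsProbabilityMeasure P] :
    ∃ k : Fin K, P.real {ω | 4 * (T:ℝ) < K * Npull k ω} ≤ 1/4 := by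
  have : Nonempty (Fin K) := ⟨⟨0, hK⟩⟩
  have hT' : (0:ℝ) < T := by exact_mod_cast hT
  refine exists_small P _ (fun k => measurableSet_lt measurable_const
    ((measurable_Npull k).const_mul _)) _ fun ω => ?_
  calc _ ≤ ∑ k, K / (4 * T) * Npull k ω := by
        refine Finset.sum_le_sum fun k _ => ?_
        have h0 : 0 ≤ Npull k ω := Finset.sum_nonneg fun i _ => by split_ifs <;> norm_num
        by_cases h : 4 * (T:ℝ) < K * Npull k ω
        · rw [Set.indicator_of_mem (by exact h), Pi.one_apply, div_mul_eq_mul_div,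
            le_div_iff₀ (by positivity)]
          linarith
        · rw [Set.indicator_of_notMem (by exact h)]
          positivity
    _ = K / (4 * T) * T := by
        rw [← Finset.mul_sum]
        congr 1
        unfold Npull
        rw [Finset.sum_comm]
        simp
    _ ≤ _ := by
        rw [Fintype.card_fin]
        apply le_of_eq
        field_simp

lemma one_le_sup {d K T : ℕ} (hd : 0 < d) (γ : ℝ) (w : Fin d → Bool) (k : Fin K) :
    1 ≤ ⨆ a, fEx d K T γ w k a := by
  refine le_trans ?_ (le_ciSup (Set.finite_range _).bddAbove (some w, k))
  have h1 : ip w w = d := by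
    have : ∀ b, sgn b * sgn b = 1 := by intro b; cases b <;> simp [sgn]
    simp [ip, this]
  have hd' : (0:ℝ) < d := by exact_mod_cast hd
  simp only [fEx, hfun, h1, if_true]
  rw [max_eq_right (by linarith)]
  apply le_of_eq
  field_simp
  ring

/-- **Proposition 2, second part (regret lower bound for Example 1).** For any
algorithm there is a model `(w,k) ∈ M̃` under which, with probability at least `1/3`,
the γ-regret over `T` rounds is at least `(γ/10)√(KT)`. -/
theorem example_regret_lower_bound (d K T : ℕ) (γ : ℝ) (hγ : γ ∈ Set.Ioc (0:ℝ) 1)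
    (hdT : 180 * (T:ℝ) ≤ Real.exp ((d:ℝ) / 8))
    (hKT : (K:ℝ) ≤ 20 * (T:ℝ))
    (hKγ : 6000 / γ^2 ≤ (K:ℝ))
    (hT : 144 ≤ T)
    (alg : (t : ℕ) → Kernel (Fin t → ExAct d K × ℝ) (ExAct d K))
    (halg : ∀ t, IsMarkovKernel (alg t)) :
    ∃ (w : Fin d → Bool) (k : Fin K),
      trajMeasure (fEx d K T γ w k) alg T
          {ω | (γ/10) * Real.sqrt ((K:ℝ) * T) ≤
                ∑ t : Fin T,
                  (γ * (⨆ a, fEx d K T γ w k a) - fEx d K T γ w k (ω t).1)} ≥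
        1 / 3 := by
  obtain ⟨hγ0, hγ1⟩ := hγ
  have hTr : (144:ℝ) ≤ T := by exact_mod_cast hT
  have hK6 : (6000:ℝ) ≤ K := by
    refine le_trans ?_ hKγ
    rw [le_div_iff₀ (by positivity)]
    nlinarith
  have hKpos : 0 < K := by
    have : (0:ℝ) < K := by linarith
    exact_mod_cast this
  have hd : 0 < d := by
    rcases Nat.eq_zero_or_pos d with h | h
    · subst h; norm_num at hdT; linarith
    · exact h
  set Δ : ℝ := Real.sqrt ((K:ℝ) / (20 * (T:ℝ))) with hΔ
  have hΔ0 : 0 ≤ Δ := Real.sqrt_nonneg _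
  have hΔsq : Δ^2 = K / (20 * T) := Real.sq_sqrt (by positivity)
  let g : ExAct d K → ℝ := fun _ => γ * (1 - Δ)
  have hP : IsProbabilityMeasure (trajMeasure g alg T) := traj_prob g alg T
  obtain ⟨w, hw⟩ := exists_w (trajMeasure g alg T) hdT
  obtain ⟨k, hk⟩ := exists_k hKpos (by omega) (trajMeasure g alg T)
  refine ⟨w, k, ?_⟩
  let f' : ExAct d K → ℝ := fun a => γ * (1 - Δ) - γ * Δ * (if a.2 = k then 1 else 0)
  set C : Set (Fin T → ExAct d K × ℝ) := {ω | 4 * (T:ℝ) < K * Npull k ω} with hC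
  have mC : MeasurableSet C := measurableSet_lt measurable_const ((measurable_Npull k).const_mul _)
  set A : Set (Fin T → ExAct d K × ℝ) := (Hit w ∪ C)ᶜ with hA
  have mA : MeasurableSet A := ((measurable_Hit w).union mC).compl
  have hPA : 1 - 1/180 - 1/4 ≤ (trajMeasure g alg T).real A := by
    rw [hA, probReal_compl_eq_one_sub ((measurable_Hit w).union mC)]
    have := measureReal_union_le (μ := trajMeasure g alg T) (Hit w) C
    linarith
  have hfA : ∀ ω ∈ A, ∀ t, fEx d K T γ w k (ω t).1 =
      γ * (1 - Δ) + γ * Δ * (if (ω t).1.2 = k then 1 else 0) := by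
    intro ω hω t
    have h0 : hfun w (ω t).1.1 = 0 := by
      by_contra h
      exact hω (Or.inl ⟨t, h⟩)
    simp only [fEx, h0, ← hΔ]
    split_ifs <;> ring
  have hNA : ∀ ω ∈ A, K * Npull k ω ≤ 4 * T := by
    intro ω hω
    by_contra h
    exact hω (Or.inr (not_le.mp h))
  have hcore := core (fEx d K T γ w k) f' g alg T A mA ?_
  · have hfp : IsProbabilityMeasure (trajMeasure (fEx d K T γ w k) alg T) := traj_prob _ alg T
    have hQ : (1:ℝ)/3 ≤ (trajMeasure (fEx d K T γ w k) alg T).real A := by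
      have h2 := ENNReal.toReal_mono (by finiteness) hcore
      rw [ENNReal.toReal_add (by finiteness) (by finiteness),
        ENNReal.toReal_ofReal (by norm_num)] at h2
      simp only [Measure.real] at hPA ⊢
      linarith
    have hQ' : (1:ℝ≥0∞)/3 ≤ trajMeasure (fEx d K T γ w k) alg T A := by
      have : (1:ℝ≥0∞)/3 = ENNReal.ofReal (1/3) := by
        rw [ENNReal.ofReal_div_of_pos (by norm_num)]; simp
      rw [this]
      exact ENNReal.ofReal_le_of_le_toReal hQ
    refine le_trans hQ' (measure_mono fun ω hω => ?_)
    have hsup := one_le_sup (T := T) hd γ w k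
    have hN := hNA ω hω
    simp only [Set.mem_ofPred_eq]
    have hreg : ∑ t : Fin T, (γ * 1 - fEx d K T γ w k (ω t).1) = γ * Δ * (T - Npull k ω) := by
      rw [Finset.sum_congr rfl fun t _ => by rw [hfA ω hω t]]
      rw [Npull, Finset.sum_sub_distrib, Finset.sum_add_distrib]
      simp only [Finset.sum_const, Finset.card_univ, Fintype.card_fin, nsmul_eq_mul]
      rw [← Finset.mul_sum]
      ring
    calc (γ/10) * Real.sqrt ((K:ℝ) * T) ≤ γ * Δ * (T - Npull k ω) := by
          have hN2 : Npull k ω ≤ T / 1500 := by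
            by_contra h
            push Not at h
            nlinarith
          have hs : Real.sqrt ((K:ℝ) * T) ≤ 5 * (Δ * T) := by
            apply Real.sqrt_le_iff.mpr
            refine ⟨by positivity, ?_⟩
            have : (5 * (Δ * T))^2 = 25 / 20 * (K * T) := by
              rw [mul_pow, mul_pow, hΔsq]; field_simp; norm_num
            rw [this]
            nlinarith [mul_pos (show (0:ℝ) < K by linarith) (show (0:ℝ) < T by linarith)]
          have h3 : γ * Δ * (T / 2) ≤ γ * Δ * (T - Npull k ω) := by
            gcongr
            linarith
          nlinarith
      _ = ∑ t : Fin T, (γ * 1 - fEx d K T γ w k (ω t).1) := hreg.symm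
      _ ≤ _ := by
          refine Finset.sum_le_sum fun t _ => ?_
          have := mul_le_mul_of_nonneg_left hsup hγ0.le
          linarith
  · intro ω hω
    have hN := hNA ω hω
    have e : likr (fEx d K T γ w k) g ω + likr f' g ω = - (γ * Δ)^2 * Npull k ω := by
      rw [likr, likr, ← Finset.sum_add_distrib, Npull, Finset.mul_sum]
      refine Finset.sum_congr rfl fun t _ => ?_
      rw [hfA ω hω t]
      simp only [g, f']
      split_ifs <;> ring
    rw [e, mul_pow, hΔsq]
    have h4 : (K / (20 * T) : ℝ) * Npull k ω ≤ 1/5 := by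
      rw [div_mul_eq_mul_div, div_le_iff₀ (by positivity)]
      linarith
    have h5 : γ^2 ≤ 1 := by nlinarith
    have h6 : 0 ≤ Npull k ω := Finset.sum_nonneg fun i _ => by split_ifs <;> norm_num
    have h7 : 0 ≤ (K / (20 * T) : ℝ) * Npull k ω := by positivity
    nlinarith

end
end

section
/- Squared-error bound for the hardest model in the Example. Fix integers d, K ≥ 1, T ≥ 1 with K ≤ 20T, and γ ∈ (0,1]. Let p be any probability distribution on Π. Let w̃ ∈ {−1,1}^d minimize E_{(π',π)∼p}[1(⟨w,π'⟩ ≥ d/2)] over w ∈ {−1,1}^d, and let k̃ ∈ {1,…,K} minimize E_{(π',π)∼p}[1(π = k)] over k. Then E_{(π',π)∼p}[1(⟨w̃,π'⟩ ≥ d/2)] ≤ exp(−d/8), E_{(π',π)∼p}[1(π = k̃)] ≤ 1/K, and E_{(π',π)∼p}[(f_{w̃,k̃}(π',π) − f̂(π',π))²] ≤ 2·exp(−d/8) + 1/(10T). -/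
open MeasureTheory

noncomputable section

/-- The constant reference mean `f̂ = γ(1 − √(K/(20T)))`. -/
def fhat (d K T : ℕ) (γ : ℝ) : ExAct d K → ℝ :=
  fun _ => γ * (1 - Real.sqrt ((K:ℝ) / (20 * (T:ℝ))))

/-- Indicator of the event `⟨w,π'⟩ ≥ d/2` (interpreted as `0` when `π' = ⊥`). -/
def indW (d K : ℕ) (w : Fin d → Bool) : ExAct d K → ℝ :=
  fun a => match a.1 with
  | none => 0
  | some x => if (d:ℝ)/2 ≤ ip w x then 1 else 0

/-- Indicator of the event `π = k`. -/
def indK (d K : ℕ) (k : Fin K) : ExAct d K → ℝ :=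
  fun a => if a.2 = k then 1 else 0

lemma ip_comm' {d : ℕ} (w x : Fin d → Bool) : ip w x = ip x w := by
  unfold ip
  exact Finset.sum_congr rfl fun i _ => mul_comm _ _

lemma ip_le {d : ℕ} (w x : Fin d → Bool) : ip w x ≤ d := by
  unfold ip
  calc ∑ i, sgn (w i) * sgn (x i) ≤ ∑ _i : Fin d, (1:ℝ) := by
        refine Finset.sum_le_sum fun i _ => ?_
        cases w i <;> cases x i <;> norm_num [sgn]
    _ = d := by simp

lemma sum_exp_ip {d : ℕ} (x : Fin d → Bool) :
    ∑ w : Fin d → Bool, Real.exp (ip w x / 2) = (2 * Real.cosh (1/2)) ^ d := by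
  have h1 : ∀ w : Fin d → Bool, Real.exp (ip w x / 2)
      = ∏ i, Real.exp (sgn (w i) * sgn (x i) / 2) := by
    intro w
    rw [← Real.exp_sum, ip, Finset.sum_div]
  have h2 : ∀ i, ∑ b : Bool, Real.exp (sgn b * sgn (x i) / 2) = 2 * Real.cosh (1/2) := by
    intro i
    rw [Real.cosh_eq]
    cases x i <;> simp [sgn] <;> ring_nf
  simp_rw [h1]
  rw [← Fintype.prod_sum (fun i (b : Bool) => Real.exp (sgn b * sgn (x i) / 2))]
  simp_rw [h2]
  simp

lemma sum_ind_le {d : ℕ} (x : Fin d → Bool) :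
    ∑ w : Fin d → Bool, (if (d:ℝ)/2 ≤ ip w x then (1:ℝ) else 0)
      ≤ 2 ^ d * Real.exp (-(d:ℝ)/8) := by
  calc _ ≤ ∑ w : Fin d → Bool, Real.exp (-(d:ℝ)/4) * Real.exp (ip w x / 2) := by
        refine Finset.sum_le_sum fun w _ => ?_
        rw [← Real.exp_add]
        split_ifs with h
        · exact Real.one_le_exp (by linarith)
        · exact (Real.exp_pos _).le
    _ = Real.exp (-(d:ℝ)/4) * (2 * Real.cosh (1/2)) ^ d := by
        rw [← Finset.mul_sum, sum_exp_ip]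
    _ ≤ Real.exp (-(d:ℝ)/4) * (2 * Real.exp ((1/2)^2/2)) ^ d := by
        have := Real.cosh_le_exp_half_sq (1/2)
        have h0 := Real.cosh_pos (1/2)
        gcongr
    _ = 2 ^ d * Real.exp (-(d:ℝ)/8) := by
        rw [mul_pow, ← Real.exp_nat_mul, mul_left_comm, ← Real.exp_add]
        congr 2
        ring

lemma integrable_ex {d K : ℕ} (p : Measure (ExAct d K)) [IsProbabilityMeasure p]
    (f : ExAct d K → ℝ) : Integrable f p := by
  haveI : DiscreteMeasurableSpace (ExAct d K) := ⟨fun _ => trivial⟩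
  exact Integrable.of_finite

lemma sum_indW_le (d K : ℕ) (a : ExAct d K) :
    ∑ w : Fin d → Bool, indW d K w a ≤ 2 ^ d * Real.exp (-(d:ℝ)/8) := by
  obtain ⟨x, k⟩ := a
  cases x with
  | none => simp only [indW, Finset.sum_const_zero]; positivity
  | some x => exact sum_ind_le x

lemma hfun_bounds {d K : ℕ} (hd : 1 ≤ d) (w : Fin d → Bool) (a : ExAct d K) :
    0 ≤ hfun w a.1 ∧ hfun w a.1 ^ 2 ≤ indW d K w a := by
  obtain ⟨x, k⟩ := a
  have hd' : (0:ℝ) < d := by exact_mod_cast hd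
  cases x with
  | none => simp [hfun, indW]
  | some x =>
    simp only [hfun, indW, ip_comm' w x]
    have hle := ip_le x w
    split_ifs with h
    · rw [max_eq_right (by linarith)]
      have h0 : 0 ≤ 2 / (d:ℝ) * (ip x w - d/2) := mul_nonneg (by positivity) (by linarith)
      refine ⟨h0, ?_⟩
      have h1 : 2 / (d:ℝ) * (ip x w - d/2) ≤ 1 := by
        rw [div_mul_eq_mul_div, div_le_one hd']; linarith
      nlinarith
    · rw [max_eq_left (by linarith)]; simp

lemma sq_bound (d K T : ℕ) (hd : 1 ≤ d) (γ : ℝ) (hγ : γ ∈ Set.Ioc (0:ℝ) 1)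
    (w : Fin d → Bool) (k : Fin K) (a : ExAct d K) :
    (fEx d K T γ w k a - fhat d K T γ a)^2 ≤
      2 * indW d K w a + 2 * ((K:ℝ) / (20 * (T:ℝ))) * indK d K k a := by
  obtain ⟨h0, h1⟩ := hfun_bounds hd w a
  obtain ⟨g0, g1⟩ := hγ
  have hs : Real.sqrt ((K:ℝ) / (20 * (T:ℝ))) ^ 2 = (K:ℝ) / (20 * (T:ℝ)) :=
    Real.sq_sqrt (by positivity)
  rw [← hs]
  simp only [fEx, fhat, indK]
  generalize Real.sqrt ((K:ℝ) / (20 * (T:ℝ))) = s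
  generalize hfun w a.1 = h at *
  have e1 : ((1-γ)*h)^2 ≤ h^2 := by
    rw [mul_pow]
    exact mul_le_of_le_one_left (sq_nonneg _) (by nlinarith)
  have e2 : (γ*s)^2 ≤ s^2 := by
    rw [mul_pow]
    exact mul_le_of_le_one_left (sq_nonneg _) (by nlinarith)
  split_ifs
  · nlinarith [sq_nonneg ((1-γ)*h - γ*s)]
  · nlinarith [sq_nonneg ((1-γ)*h)]

/-- **Squared-error bound for the hardest model in the Example.** If `w̃` minimizes
`E_p[1(⟨w,π'⟩ ≥ d/2)]` and `k̃` minimizes `E_p[1(π = k)]`, then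
`E_p[1(⟨w̃,π'⟩ ≥ d/2)] ≤ exp(−d/8)`, `E_p[1(π = k̃)] ≤ 1/K`, and
`E_p[(f_{w̃,k̃} − f̂)²] ≤ 2exp(−d/8) + 1/(10T)`. -/
theorem example_squared_error_bound (d K T : ℕ)
    (hd : 1 ≤ d) (hK : 1 ≤ K) (hT : 1 ≤ T) (hKT : (K:ℝ) ≤ 20 * (T:ℝ))
    (γ : ℝ) (hγ : γ ∈ Set.Ioc (0:ℝ) 1)
    (p : Measure (ExAct d K)) (hp : IsProbabilityMeasure p)
    (wt : Fin d → Bool)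
    (hwt : ∀ w : Fin d → Bool, ∫ a, indW d K wt a ∂p ≤ ∫ a, indW d K w a ∂p)
    (kt : Fin K)
    (hkt : ∀ k : Fin K, ∫ a, indK d K kt a ∂p ≤ ∫ a, indK d K k a ∂p) :
    (∫ a, indW d K wt a ∂p ≤ Real.exp (-(d:ℝ)/8)) ∧
    (∫ a, indK d K kt a ∂p ≤ 1 / (K:ℝ)) ∧
    (∫ a, (fEx d K T γ wt kt a - fhat d K T γ a)^2 ∂p ≤
      2 * Real.exp (-(d:ℝ)/8) + 1 / (10 * (T:ℝ))) := by
  have hKpos : (0:ℝ) < K := by exact_mod_cast hK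
  have hTpos : (0:ℝ) < T := by exact_mod_cast hT
  have A : ∫ a, indW d K wt a ∂p ≤ Real.exp (-(d:ℝ)/8) := by
    have h1 : ∑ w : Fin d → Bool, ∫ a, indW d K w a ∂p ≤ 2 ^ d * Real.exp (-(d:ℝ)/8) := by
      rw [← integral_finsetSum _ fun w _ => integrable_ex p _]
      refine (integral_mono (integrable_ex p _) (integrable_ex p _)
        (fun a => sum_indW_le d K a)).trans ?_
      simp
    have h2 := Finset.sum_le_sum (s := Finset.univ) fun w _ => hwt w
    have h3 : ∑ _w : Fin d → Bool, ∫ a, indW d K wt a ∂p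
        = 2 ^ d * ∫ a, indW d K wt a ∂p := by simp
    rw [h3] at h2
    exact le_of_mul_le_mul_left (h2.trans h1) (by positivity)
  have B : ∫ a, indK d K kt a ∂p ≤ 1 / (K:ℝ) := by
    have h1 : ∑ k : Fin K, ∫ a, indK d K k a ∂p = 1 := by
      rw [← integral_finsetSum _ fun w _ => integrable_ex p _]
      simp [indK]
    have h2 := Finset.sum_le_sum (s := Finset.univ) fun k _ => hkt k
    have h3 : ∑ _k : Fin K, ∫ a, indK d K kt a ∂p = K * ∫ a, indK d K kt a ∂p := by simp
    rw [h3, h1] at h2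
    rw [le_div_iff₀ hKpos]
    linarith
  refine ⟨A, B, ?_⟩
  refine (integral_mono (integrable_ex p _) (integrable_ex p _)
    (fun a => sq_bound d K T hd γ hγ wt kt a)).trans ?_
  rw [integral_add (integrable_ex p _) (integrable_ex p _), integral_const_mul,
    integral_const_mul]
  have h4 : 2 * ((K:ℝ) / (20 * (T:ℝ))) * ∫ a, indK d K kt a ∂p ≤ 1 / (10 * (T:ℝ)) := by
    calc _ ≤ 2 * ((K:ℝ) / (20 * (T:ℝ))) * (1 / (K:ℝ)) := by gcongr
      _ = _ := by field_simp; norm_num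
  linarith

end
end
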